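/- Let U_0, B_0 ∈ L^∞(ℝ^D) be divergence-free, ν, μ > 0, and let (U^(n), B^(n), Π^(n)) be the approximation scheme for the MHD system. There exists a constant C_4 ≥ 1 depending only on μ, ν, D such that for every β ∈ (1/2, 1], setting A = ‖U_0‖_{L^∞} + ‖B_0‖_{L^∞}, T_4 = 1/(16 C_4⁴ A²) and T_β = ((2β−1)²/β⁴) T_4, for every 0 < T ≤ T_β, every n ∈ ℕ and every t ∈ (0, T): the functions U^(n)(·,t) and B^(n)(·,t) admit holomorphic extensions u^(n)(·,t) + i v^(n)(·,t) and b^(n)(·,t) + i c^(n)(·,t) to the complex strip { x + iy ∈ ℂ^D : |y| ≤ √t/(2 C_4) }, and these extensions satisfy sup over the strip of (|u^(n) + i v^(n)| + |b^(n) + i c^(n)|) ≤ 2 β C_4 A. -/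

import Mathlib

/-!
The approximants are treated component by component. A *holomorphic field* (`HolField`) on `(0,T)`
is a jointly measurable scalar field whose slice at time `s` extends to the open strip
`{|im z| < √s}` with a uniform bound `M`; the components of `U^(n)` and `B^(n)` are shown to be
such fields by induction on `n`.

Under the parabolic scaling `ρ = t^{-1/2}` every kernel in the scheme becomes a power of `ρ` times
a rescaled convolution `SS K ρ g` with a fixed entire kernel `K` of Gaussian decay (`GoodK`). If `g`
is holomorphic and bounded by `M` on a strip, the contour `ℝ^D` can be moved to `ℝ^D + ia`
(`contour_shift`), and `|SS K ρ g z| ≤ N M` as long as `ρ |im z - a| ≤ 1` (`SS_bound`). In a Duhamel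
integral at time `t` with `|im z| < √t`, the choice `a = (s/t) im z` keeps the contour inside the
strip of width `√s` and at distance at most `√(t-s)` from `im z` (`HolField.slice_bound`), so the
integrand is `O((t-s)^{-1/2})` and the integral is `O(√t)`.

The pressure is only of bounded mean oscillation and is eliminated. The function
`r ↦ ∂_k G(r) * Π` tends to `0` as `r → ∞`, because `∂_k G` has mean zero and a function of bounded
mean oscillation is controlled against Gaussians (`bmo_gauss`, `hP_tendsto`). Its derivative is
`ν Δ∂_k G(r) * Π = -ν ∂_j∂_l∂_k G(r) * g_{jl}` by the heat equation and the Poisson equation, with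
`g = U ⊗ U - B ⊗ B`. Hence `∂_k G(τ) * Π = ν ∫_τ^∞ ∂_j∂_l∂_k G(r) * g_{jl} dr`
(`pressure_identity`), which is again a superposition of terms `r^{-3/2} SS K r^{-1/2} g`, of total
size `O(τ^{-1/2})`.

Holomorphy of the integrals rests on Osgood's lemma, which follows from Cauchy's formula on a
polydisc (`cauchy_torus`, `osgood`, `analyticOnNhd_integral`). One step of the scheme then turns the
bound `M` into `c (A + M² √T)` (`scheme_step`), and the condition on `T` makes this at most `M`
for `M = 2 β C₄ A` (`time_small`).
-/

open MeasureTheory Real Set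

noncomputable section

/-- `ℝ^D` as a Euclidean space. -/
abbrev Spc (D : ℕ) := EuclideanSpace ℝ (Fin D)

/-- `ℂ^D` as a (complex) Euclidean space. -/
abbrev CSpc (D : ℕ) := EuclideanSpace ℂ (Fin D)

variable {D : ℕ}

/-- The heat kernel `G_λ(x,t) = (4πλt)^{-D/2} exp(-|x|²/(4λt))`. -/
def heatK (D : ℕ) (lam : ℝ) (x : Spc D) (t : ℝ) : ℝ :=
  (4 * π * lam * t) ^ (-(D : ℝ) / 2) * Real.exp (-‖x‖ ^ 2 / (4 * lam * t))

/-- Spatial partial derivative in the `j`-th coordinate direction. -/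
def pd (j : Fin D) (f : Spc D → ℝ) (x : Spc D) : ℝ :=
  fderiv ℝ f x (EuclideanSpace.single j 1)

/-- Laplacian. -/
def lap (f : Spc D → ℝ) (x : Spc D) : ℝ := ∑ j, pd j (fun y => pd j f y) x

/-- Membership in `L^∞` for a (bounded, measurable) vector field. -/
def MemLinf (f : Spc D → Spc D) : Prop :=
  AEStronglyMeasurable f volume ∧ BddAbove (Set.range fun x => ‖f x‖)

/-- The `L^∞`-norm (supremum norm) of a vector field. -/
def supN (f : Spc D → Spc D) : ℝ := ⨆ x, ‖f x‖

/-- The sup norm in space of a time slice of a time dependent field. -/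
def slN (F : ℝ → Spc D → Spc D) (t : ℝ) : ℝ := ⨆ x, ‖F t x‖

/-- Sup norm over the space-time region `(0,T) × ℝ^D`. -/
def stSup (T : ℝ) (F : ℝ → Spc D → Spc D) : ℝ :=
  ⨆ t ∈ Set.Ioo (0 : ℝ) T, ⨆ x, ‖F t x‖

/-- Sup norm over the space-time region `[0,T) × ℝ^D`. -/
def stSupIco (T : ℝ) (F : ℝ → Spc D → Spc D) : ℝ :=
  ⨆ t ∈ Set.Ico (0 : ℝ) T, ⨆ x, ‖F t x‖

/-- The set of mean oscillations of `f` over all Euclidean balls. -/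
def oscSet (f : Spc D → ℝ) : Set ℝ :=
  {v | ∃ (c : Spc D) (r : ℝ), 0 < r ∧
    v = ⨍ y in Metric.ball c r, |f y - ⨍ z in Metric.ball c r, f z|}

/-- The BMO seminorm of `f`. -/
def bmoNorm (f : Spc D → ℝ) : ℝ := sSup (oscSet f)

/-- `f` is of bounded mean oscillation. -/
def IsBMO (f : Spc D → ℝ) : Prop :=
  LocallyIntegrable f volume ∧ BddAbove (oscSet f)

/-- Divergence-free in the sense of distributions. -/
def DivFree (F : Spc D → Spc D) : Prop :=
  ∀ φ : SchwartzMap (Spc D) ℝ, ∑ j, ∫ x, F x j * pd j (⇑φ) x = 0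

/-- `p` solves `Δ p = -∂_j∂_k g_{jk}` (summed over `j,k`) in the sense of distributions. -/
def SolvesPoisson (D : ℕ) (p : Spc D → ℝ) (g : Fin D → Fin D → Spc D → ℝ) : Prop :=
  ∀ φ : SchwartzMap (Spc D) ℝ,
    ∫ x, p x * lap (⇑φ) x
      = - ∑ j, ∑ k, ∫ x, g j k x * pd j (fun y => pd k (⇑φ) y) x

/-- Mild solution of the MHD system with viscosity `ν`, diffusivity `μ`, data `U₀, B₀`;
the Duhamel identities hold at every time in `I`. -/
def MildMHD (D : ℕ) (ν μ : ℝ) (U₀ B₀ : Spc D → Spc D) (I : Set ℝ)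
    (U B : ℝ → Spc D → Spc D) : Prop :=
  ∃ P : ℝ → Spc D → ℝ,
    (∀ t ∈ I, IsBMO (P t) ∧
      SolvesPoisson D (P t)
        (fun j k x => U t x j * U t x k - B t x j * B t x k)) ∧
    (∀ t ∈ I, BddAbove (Set.range fun x => ‖U t x‖) ∧
      BddAbove (Set.range fun x => ‖B t x‖)) ∧
    (∀ t ∈ I, ∀ (x : Spc D) (k : Fin D),
      U t x k = (∫ w, heatK D ν (x - w) t * U₀ w k)
        - (∫ s in Set.Ioo (0 : ℝ) t, ∫ w,
            ∑ j, pd j (fun y => heatK D ν y (t - s)) (x - w)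
              * (U s w j * U s w k - B s w j * B s w k))
        - (∫ s in Set.Ioo (0 : ℝ) t, ∫ w,
            pd k (fun y => heatK D ν y (t - s)) (x - w) * P s w) ∧
      B t x k = (∫ w, heatK D μ (x - w) t * B₀ w k)
        - (∫ s in Set.Ioo (0 : ℝ) t, ∫ w,
            ∑ j, pd j (fun y => heatK D μ y (t - s)) (x - w)
              * (U s w j * B s w k - B s w j * U s w k)))

/-- The approximation scheme for the MHD system. -/
def ApproxMHD (D : ℕ) (ν μ : ℝ) (U₀ B₀ : Spc D → Spc D)
    (U B : ℕ → ℝ → Spc D → Spc D) (P : ℕ → ℝ → Spc D → ℝ) : Prop :=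
  (∀ t x, U 0 t x = 0) ∧ (∀ t x, B 0 t x = 0) ∧ (∀ t x, P 0 t x = 0) ∧
  (∀ n : ℕ, ∀ x, U (n + 1) 0 x = U₀ x ∧ B (n + 1) 0 x = B₀ x) ∧
  (∀ (n : ℕ) (t : ℝ), 0 < t → ∀ (x : Spc D) (k : Fin D),
    U (n + 1) t x k = (∫ w, heatK D ν (x - w) t * U₀ w k)
      - (∫ s in Set.Ioo (0 : ℝ) t, ∫ w,
          ∑ j, pd j (fun y => heatK D ν y (t - s)) (x - w)
            * (U n s w j * U n s w k - B n s w j * B n s w k))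
      - (∫ s in Set.Ioo (0 : ℝ) t, ∫ w,
          pd k (fun y => heatK D ν y (t - s)) (x - w) * P n s w) ∧
    B (n + 1) t x k = (∫ w, heatK D μ (x - w) t * B₀ w k)
      - (∫ s in Set.Ioo (0 : ℝ) t, ∫ w,
          ∑ j, pd j (fun y => heatK D μ y (t - s)) (x - w)
            * (U n s w j * B n s w k - B n s w j * U n s w k))) ∧
  (∃ Cd : ℝ, 0 < Cd ∧ ∀ (n : ℕ) (t : ℝ), 0 < t →
    IsBMO (P (n + 1) t) ∧
    SolvesPoisson D (P (n + 1) t)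
      (fun j k x => U (n + 1) t x j * U (n + 1) t x k - B (n + 1) t x j * B (n + 1) t x k) ∧
    bmoNorm (P (n + 1) t)
      ≤ Cd * ⨆ x, ∑ j, ∑ k,
          |U (n + 1) t x j * U (n + 1) t x k - B (n + 1) t x j * B (n + 1) t x k|)

/-- The imaginary part of a point of `ℂ^D` as a point of `ℝ^D`. -/
def imPart (z : CSpc D) : Spc D := (WithLp.equiv 2 (Fin D → ℝ)).symm fun j => (z j).im

/-- The canonical embedding `ℝ^D ↪ ℂ^D`. -/
def toC (x : Spc D) : CSpc D := (WithLp.equiv 2 (Fin D → ℂ)).symm fun j => (x j : ℂ)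

/-- The closed strip `{x + iy ∈ ℂ^D : |y| ≤ ρ}`. -/
def strip (D : ℕ) (ρ : ℝ) : Set (CSpc D) := {z | ‖imPart z‖ ≤ ρ}

/-- Super-level set of a time dependent vector field. -/
def superLevel (F : ℝ → Spc D → Spc D) (t M : ℝ) : Set (Spc D) :=
  {x | M < ‖F t x‖}

/-- `S` is linearly `δ`-sparse around `x₀` at scale `r`. -/
def LinSparse (δ : ℝ) (S : Set (Spc D)) (x₀ : Spc D) (r : ℝ) : Prop :=
  ∃ d : Spc D, ‖d‖ = 1 ∧
    (volume {τ : ℝ | τ ∈ Set.Ioo (-r) r ∧ x₀ + τ • d ∈ S}).toReal ≤ δ * (2 * r)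

/-- The uniform analytic extension property for the constant `C₄`: mild solutions with
bounded divergence-free data extend holomorphically to the strip of width `√t/(2C₄)`
with the uniform bound `2βC₄(‖V₀‖_∞ + ‖W₀‖_∞)`. -/
def UnifAnalExt (D : ℕ) (ν μ : ℝ) (C₄ : ℝ) : Prop :=
  ∀ (V₀ W₀ : Spc D → Spc D) (Tstar : ℝ) (V W : ℝ → Spc D → Spc D),
    MemLinf V₀ → MemLinf W₀ → DivFree V₀ → DivFree W₀ →
    MildMHD D ν μ V₀ W₀ (Set.Ioo 0 Tstar) V W →
    ∀ β ∈ Set.Ioc (1 / 2 : ℝ) 1, ∀ t : ℝ, 0 < t →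
      t < min Tstar ((2 * β - 1) ^ 2 / β ^ 4
          * (1 / (16 * C₄ ^ 4 * (supN V₀ + supN W₀) ^ 2))) →
      ∃ F H : CSpc D → CSpc D,
        AnalyticOnNhd ℂ F (strip D (Real.sqrt t / (2 * C₄))) ∧
        AnalyticOnNhd ℂ H (strip D (Real.sqrt t / (2 * C₄))) ∧
        (∀ x : Spc D, F (toC x) = toC (V t x)) ∧
        (∀ x : Spc D, H (toC x) = toC (W t x)) ∧
        ∀ z ∈ strip D (Real.sqrt t / (2 * C₄)),
          ‖F z‖ + ‖H z‖ ≤ 2 * β * C₄ * (supN V₀ + supN W₀)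

/-- The magnetic-field bound property for the constant `C₃`. -/
def MagBound (D : ℕ) (ν μ : ℝ) (C₃ : ℝ) : Prop :=
  ∀ (V₀ W₀ : Spc D → Spc D), MemLinf V₀ → MemLinf W₀ → DivFree V₀ → DivFree W₀ →
  ∀ T : ℝ, 0 < T → ∀ V W, MildMHD D ν μ V₀ W₀ (Set.Ioo 0 T) V W →
    ∀ t ∈ Set.Ioo (0 : ℝ) (min T (1 / (16 * C₃ ^ 2 * (stSup T V) ^ 2))),
      ∀ x, ‖W t x‖ ≤ 2 * C₃ * supN W₀

section Aux

open Filter Topology Metric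

/-! ### Cauchy's formula on a polydisc and Osgood's lemma -/

lemma torusMap_mem_closedBall {n : ℕ} (c : Fin n → ℂ) {r : ℝ} (hr : 0 ≤ r) (θ : Fin n → ℝ) :
    torusMap c (fun _ => r) θ ∈ closedBall c r := by
  rw [mem_closedBall, dist_pi_le_iff hr]
  intro i
  simp [torusMap, dist_eq_norm, Complex.norm_exp_ofReal_mul_I, abs_of_nonneg hr]

lemma continuous_torusMap {n : ℕ} (c : Fin n → ℂ) (R : Fin n → ℝ) :
    Continuous (torusMap c R) := by
  unfold torusMap
  fun_prop

lemma torusMap_sub_ne_zero {n : ℕ} {c z : Fin n → ℂ} {r : ℝ} (hz : z ∈ ball c r)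
    (θ : Fin n → ℝ) (i : Fin n) : torusMap c (fun _ => r) θ i - z i ≠ 0 := by
  have hr : 0 < r := pos_of_mem_ball hz
  intro h
  have h1 : dist (z i) (c i) < r := (dist_pi_lt_iff hr).1 (mem_ball.1 hz) i
  have h2 : torusMap c (fun _ => r) θ i = z i := sub_eq_zero.1 h
  rw [← h2] at h1
  simp [torusMap, dist_eq_norm, Complex.norm_exp_ofReal_mul_I, abs_of_pos hr] at h1

/-- Cauchy's integral formula on a polydisc for continuous separately holomorphic functions. -/
lemma cauchy_torus : ∀ (n : ℕ) (f : (Fin n → ℂ) → ℂ) (c : Fin n → ℂ) (r : ℝ), 0 < r →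
    ContinuousOn f (closedBall c r) →
    (∀ z ∈ closedBall c r, ∀ i, DifferentiableOn ℂ (fun ζ => f (Function.update z i ζ))
      (closedBall (c i) r)) →
    ∀ z ∈ ball c r,
      (∯ ζ in T(c, fun _ => r), (∏ i, (ζ i - z i)⁻¹) * f ζ) = (2 * π * Complex.I) ^ n * f z := by
  intro n
  induction n with
  | zero =>
    intro f c r hr hf hd z hz
    rw [torusIntegral_dim0]
    simp [Subsingleton.elim z c]
  | succ n ih =>
    intro f c r hr hf hd z hz
    have hzi : ∀ i, dist (z i) (c i) < r := (dist_pi_lt_iff hr).1 (mem_ball.1 hz)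
    rw [torusIntegral_succ]
    · have hcons : ∀ x ∈ closedBall (c 0) r, ∀ y ∈ closedBall (c ∘ Fin.succ) r,
          (Fin.cons x y : Fin (n+1) → ℂ) ∈ closedBall c r := by
        intro x hx y hy
        rw [mem_closedBall, dist_pi_le_iff hr.le] at hy ⊢
        intro i
        refine Fin.cases ?_ (fun j => ?_) i
        · simpa using hx
        · simpa using hy j
      have hinner : ∀ x ∈ sphere (c 0) r,
          (∯ y in T(c ∘ Fin.succ, (fun _ => r) ∘ Fin.succ),
            (∏ i, ((Fin.cons x y : Fin (n+1) → ℂ) i - z i)⁻¹) * f (Fin.cons x y))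
          = (2 * π * Complex.I) ^ n * ((x - z 0)⁻¹ • f (Function.update z 0 x)) := by
        intro x hx
        have hx' : x ∈ closedBall (c 0) r := sphere_subset_closedBall hx
        have h1 := ih (fun y => f (Fin.cons x y)) (c ∘ Fin.succ) r hr ?_ ?_ (z ∘ Fin.succ) ?_
        · have h2 : (Fin.cons x (z ∘ Fin.succ) : Fin (n+1) → ℂ) = Function.update z 0 x := by
            ext i
            refine Fin.cases ?_ (fun j => ?_) i <;> simp
          rw [h2] at h1
          have h3 : ∀ y : Fin n → ℂ,
              (∏ i, ((Fin.cons x y : Fin (n+1) → ℂ) i - z i)⁻¹) * f (Fin.cons x y)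
              = (x - z 0)⁻¹ * ((∏ i, (y i - (z ∘ Fin.succ) i)⁻¹) * f (Fin.cons x y)) := by
            intro y
            rw [Fin.prod_univ_succ]
            simp [mul_assoc]
          simp_rw [h3]
          rw [torusIntegral_const_mul]
          have h4 : ((fun _ => r) ∘ Fin.succ : Fin n → ℝ) = fun _ => r := rfl
          rw [h4, h1, smul_eq_mul]
          ring
        · refine hf.comp ?_ (fun y hy => hcons x hx' y hy)
          exact (Continuous.finCons (A := fun _ : Fin (n + 1) => ℂ) continuous_const
            continuous_id).continuousOn
        · intro y hy i
          have := hd (Fin.cons x y) (hcons x hx' y hy) i.succ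
          refine this.congr ?_
          intro ζ hζ
          congr 1
          rw [Fin.cons_update]
        · rw [mem_ball, dist_pi_lt_iff hr]
          intro i
          exact hzi i.succ
      rw [circleIntegral.integral_congr hr.le hinner, circleIntegral.integral_const_mul]
      have := (hd z (ball_subset_closedBall hz) 0).circleIntegral_sub_inv_smul
        (w := z 0) (mem_ball.2 (hzi 0))
      rw [this]
      simp [pow_succ, mul_assoc]
    · unfold TorusIntegrable
      refine Continuous.integrableOn_Icc ?_
      refine Continuous.mul ?_ ?_
      · refine continuous_finsetProd _ fun i _ => Continuous.inv₀ ?_ ?_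
        · have := (continuous_apply i).comp (continuous_torusMap c (fun _ => r))
          exact this.sub continuous_const
        · intro θ
          exact torusMap_sub_ne_zero hz θ i
      · exact hf.comp_continuous (continuous_torusMap _ _)
          (fun θ => torusMap_mem_closedBall c hr.le θ)

open scoped BoundedContinuousFunction

/-- Osgood's lemma at a point: the Cauchy kernel `z ↦ ∏ (ζ i - z i)⁻¹` is analytic as a map into
the Banach algebra of bounded continuous functions of the torus parameter, and integration against
the boundary values is a continuous linear functional on that algebra. -/
lemma osgood_pi {n : ℕ} (f : (Fin n → ℂ) → ℂ) (c : Fin n → ℂ) (r : ℝ) (hr : 0 < r)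
    (hf : ContinuousOn f (closedBall c r))
    (hd : ∀ z ∈ closedBall c r, ∀ i, DifferentiableOn ℂ (fun ζ => f (Function.update z i ζ))
      (closedBall (c i) r)) : AnalyticAt ℂ f c := by
  -- the coordinate functions `θ ↦ r exp (i θ_i)` and their inverses
  have he_norm : ∀ (i : Fin n) (θ : Fin n → ℝ), ‖(r : ℂ) * Complex.exp (θ i * Complex.I)‖ ≤ r := by
    intro i θ
    simp [Complex.norm_exp_ofReal_mul_I, abs_of_pos hr]
  let e : Fin n → ((Fin n → ℝ) →ᵇ ℂ) := fun i => BoundedContinuousFunction.ofNormedAddCommGroup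
    (fun θ : Fin n → ℝ => (r : ℂ) * Complex.exp (θ i * Complex.I)) (by fun_prop) r (he_norm i)
  let e' : Fin n → ((Fin n → ℝ) →ᵇ ℂ) := fun i => BoundedContinuousFunction.ofNormedAddCommGroup
    (fun θ : Fin n → ℝ => (r : ℂ)⁻¹ * Complex.exp (-(θ i * Complex.I))) (by fun_prop) r⁻¹ (by
      intro θ
      have : -((θ i : ℂ) * Complex.I) = ((-θ i : ℝ) : ℂ) * Complex.I := by push_cast; ring
      rw [this]
      simp only [norm_mul, Complex.norm_exp_ofReal_mul_I, norm_inv, Complex.norm_real,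
        Real.norm_eq_abs, abs_of_pos hr, mul_one, le_refl])
  have hrc : (r : ℂ) ≠ 0 := by exact_mod_cast hr.ne'
  have hee : ∀ i, e i * e' i = 1 := by
    intro i
    ext θ
    simp only [e, e', BoundedContinuousFunction.coe_mul, Pi.mul_apply,
      BoundedContinuousFunction.coe_ofNormedAddCommGroup, BoundedContinuousFunction.coe_one,
      Pi.one_apply]
    rw [mul_mul_mul_comm, mul_inv_cancel₀ hrc, ← Complex.exp_add]
    simp
  have hunit : ∀ i, IsUnit (e i) := fun i => IsUnit.of_mul_eq_one _ (hee i)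
  -- boundary values of `f` times the Jacobian
  have hφc : Continuous (fun θ : Fin n → ℝ => (∏ i, (r : ℂ) * Complex.exp (θ i * Complex.I)
      * Complex.I) * f (torusMap c (fun _ => r) θ)) := by
    refine Continuous.mul (by fun_prop) ?_
    exact hf.comp_continuous (continuous_torusMap _ _)
      (fun θ => torusMap_mem_closedBall c hr.le θ)
  obtain ⟨M, hM⟩ := (isCompact_closedBall c r).exists_bound_of_continuousOn hf
  let φ : ((Fin n → ℝ) →ᵇ ℂ) := BoundedContinuousFunction.ofNormedAddCommGroup _ hφc (r ^ n * M) (by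
    intro θ
    rw [norm_mul, norm_prod]
    refine mul_le_mul ?_ (hM _ (torusMap_mem_closedBall c hr.le θ)) (norm_nonneg _) (by positivity)
    simp [Complex.norm_exp_ofReal_mul_I, abs_of_pos hr])
  let μT : Measure (Fin n → ℝ) := volume.restrict (Icc 0 fun _ => 2 * π)
  have : IsFiniteMeasure μT := ⟨by
    simp only [μT, Measure.restrict_apply_univ]
    exact isCompact_Icc.measure_lt_top⟩
  let L : ((Fin n → ℝ) →ᵇ ℂ) →L[ℂ] ℂ := LinearMap.mkContinuous
    { toFun := fun g => ∫ θ, g θ ∂μT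
      map_add' := fun g h => integral_add (g.integrable μT) (h.integrable μT)
      map_smul' := fun a g => by
        simp only [BoundedContinuousFunction.coe_smul, RingHom.id_apply]
        exact integral_smul _ _ } (μT.real univ) (by
        intro g
        have := norm_integral_le_of_norm_le_const (μ := μT) (f := g) (C := ‖g‖)
          (Eventually.of_forall fun θ => g.norm_coe_le_norm θ)
        rw [mul_comm]
        exact this)
  let u : Fin n → (Fin n → ℂ) → ((Fin n → ℝ) →ᵇ ℂ) := fun i z => e i + (c i - z i) • (1 : (Fin n → ℝ) →ᵇ ℂ)
  have hu_an : ∀ i, AnalyticAt ℂ (u i) c := by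
    intro i
    refine AnalyticAt.fun_add analyticAt_const ?_
    refine AnalyticAt.fun_smul (AnalyticAt.fun_sub analyticAt_const ?_) analyticAt_const
    exact (ContinuousLinearMap.proj (R := ℂ) (φ := fun _ : Fin n => ℂ) i).analyticAt c
  have hΨ : AnalyticAt ℂ (fun z => L ((∏ i, Ring.inverse (u i z)) * φ)) c := by
    refine (L.analyticAt _).comp ?_
    refine AnalyticAt.mul ?_ analyticAt_const
    refine Finset.analyticAt_fun_prod _ fun i _ => ?_
    have h0 : u i c = (hunit i).unit := by simp [u]
    have h1 : AnalyticAt ℂ Ring.inverse (u i c) := by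
      rw [h0]
      exact analyticAt_inverse _
    exact h1.comp (hu_an i)
  have hev : (fun z => ((2 * π * Complex.I) ^ n)⁻¹ * L ((∏ i, Ring.inverse (u i z)) * φ))
      =ᶠ[𝓝 c] f := by
    have hun : ∀ᶠ z in 𝓝 c, ∀ i, IsUnit (u i z) := by
      rw [eventually_all]
      intro i
      have : {x : (Fin n → ℝ) →ᵇ ℂ | IsUnit x} ∈ 𝓝 (u i c) :=
        Units.isOpen.mem_nhds (by simpa [u] using hunit i)
      exact (hu_an i).continuousAt this
    filter_upwards [hun, ball_mem_nhds c hr] with z hz1 hz2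
    have key : L ((∏ i, Ring.inverse (u i z)) * φ)
        = (2 * π * Complex.I) ^ n * f z := by
      rw [← cauchy_torus n f c r hr hf hd z hz2]
      simp only [L, LinearMap.mkContinuous_apply, LinearMap.coe_mk, AddHom.coe_mk, torusIntegral,
        μT]
      refine integral_congr_ae (Eventually.of_forall fun θ => ?_)
      have hinv : ∀ i, (Ring.inverse (u i z)) θ = (torusMap c (fun _ => r) θ i - z i)⁻¹ := by
        intro i
        have h1 : (Ring.inverse (u i z) * u i z) = 1 := Ring.inverse_mul_cancel _ (hz1 i)
        have h2 := congrArg (fun g : (Fin n → ℝ) →ᵇ ℂ => g θ) h1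
        simp only [BoundedContinuousFunction.coe_mul, Pi.mul_apply,
          BoundedContinuousFunction.coe_one, Pi.one_apply] at h2
        have h3 : (u i z) θ = torusMap c (fun _ => r) θ i - z i := by
          simp [u, e, torusMap]
          ring
        rw [h3] at h2
        exact eq_inv_of_mul_eq_one_left h2
      have hprod : (∏ i, Ring.inverse (u i z)) θ = ∏ i, (Ring.inverse (u i z)) θ := by
        exact map_prod (⟨⟨⟨fun g : (Fin n → ℝ) →ᵇ ℂ => g θ, rfl⟩, fun _ _ => rfl⟩, rfl, fun _ _ => rfl⟩ : ((Fin n → ℝ) →ᵇ ℂ) →+* ℂ)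
          _ _
      simp only [BoundedContinuousFunction.coe_mul, Pi.mul_apply, hprod, hinv, φ,
        BoundedContinuousFunction.coe_ofNormedAddCommGroup, smul_eq_mul]
      ring
    have hne : ((2 * π * Complex.I) ^ n : ℂ) ≠ 0 :=
      pow_ne_zero _ Complex.two_pi_I_ne_zero
    rw [key, inv_mul_cancel_left₀ hne]
  exact (analyticAt_const.mul hΨ).congr hev

/-! ### Holomorphic parametric integrals -/

/-- A dominated parametric integral of holomorphic functions of one variable is holomorphic. -/
lemma differentiableOn_integral {α : Type*} [MeasurableSpace α] {μ : Measure α}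
    {H : α → ℂ → ℂ} {Ω : Set ℂ} (hΩ : IsOpen Ω)
    (hmeas : ∀ z ∈ Ω, AEStronglyMeasurable (fun a => H a z) μ)
    (hd : ∀ᵐ a ∂μ, DifferentiableOn ℂ (H a) Ω) {b : α → ℝ} (hb : Integrable b μ)
    (hbd : ∀ᵐ a ∂μ, ∀ z ∈ Ω, ‖H a z‖ ≤ b a) :
    DifferentiableOn ℂ (fun z => ∫ a, H a z ∂μ) Ω := by
  intro z₀ hz₀
  obtain ⟨ε, hε, hball⟩ := Metric.isOpen_iff.1 hΩ z₀ hz₀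
  have hr : 0 < ε / 4 := by linarith
  have hsub : ∀ z ∈ ball z₀ (ε / 4), closedBall z (ε / 4) ⊆ Ω := by
    intro z hz w hw
    apply hball
    rw [mem_ball] at hz ⊢
    rw [mem_closedBall] at hw
    linarith [dist_triangle w z z₀]
  have hsub0 : ball z₀ (ε / 4) ⊆ Ω := fun z hz => hsub z hz (mem_closedBall_self hr.le)
  have hderiv : ∀ᵐ a ∂μ, ∀ z ∈ ball z₀ (ε / 4), HasDerivAt (H a) (deriv (H a) z) z := by
    filter_upwards [hd] with a ha z hz
    exact (ha.differentiableAt (hΩ.mem_nhds (hsub0 hz))).hasDerivAt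
  have hbound : ∀ᵐ a ∂μ, ∀ z ∈ ball z₀ (ε / 4), ‖deriv (H a) z‖ ≤ b a / (ε / 4) := by
    filter_upwards [hd, hbd] with a ha ha' z hz
    refine Complex.norm_deriv_le_of_forall_mem_sphere_norm_le hr ?_ ?_
    · refine DifferentiableOn.diffContOnCl ?_
      rw [closure_ball _ hr.ne']
      exact ha.mono (hsub z hz)
    · intro w hw
      exact ha' w (hsub z hz (sphere_subset_closedBall hw))
  have hdm : AEStronglyMeasurable (fun a => deriv (H a) z₀) μ := by
    let h : ℕ → ℂ := fun n => ((ε / 8 * (1 / ((n : ℝ) + 1)) : ℝ) : ℂ)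
    have hpos : ∀ n : ℕ, 0 < ε / 8 * (1 / ((n : ℝ) + 1)) := fun n => by positivity
    have hle : ∀ n : ℕ, ε / 8 * (1 / ((n : ℝ) + 1)) ≤ ε / 8 := fun n => by
      have : (1 / ((n : ℝ) + 1)) ≤ 1 := by
        rw [div_le_one (by positivity)]
        linarith [n.cast_nonneg (α := ℝ)]
      nlinarith
    have hh0 : ∀ n, h n ≠ 0 := fun n => by
      simp only [h, ne_eq, Complex.ofReal_eq_zero]
      exact (hpos n).ne'
    have hht : Tendsto h atTop (𝓝 0) := by
      have : Tendsto (fun n : ℕ => ε / 8 * (1 / ((n : ℝ) + 1))) atTop (𝓝 (ε / 8 * 0)) :=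
        tendsto_one_div_add_atTop_nhds_zero_nat.const_mul _
      rw [mul_zero] at this
      have h2 := (Complex.continuous_ofReal.tendsto 0).comp this
      simpa [h, Function.comp_def] using h2
    have hmem : ∀ n, z₀ + h n ∈ Ω := fun n => by
      apply hball
      rw [mem_ball, dist_self_add_left]
      simp only [h, Complex.norm_real, Real.norm_eq_abs, abs_of_pos (hpos n)]
      linarith [hle n]
    refine aestronglyMeasurable_of_tendsto_ae atTop
      (f := fun n a => (h n)⁻¹ • (H a (z₀ + h n) - H a z₀)) ?_ ?_
    · intro n
      exact AEStronglyMeasurable.const_smul ((hmeas _ (hmem n)).sub (hmeas _ hz₀)) (h n)⁻¹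
    · filter_upwards [hderiv] with a ha
      have h1 := (ha z₀ (mem_ball_self hr)).tendsto_slope_zero
      refine h1.comp ?_
      rw [tendsto_nhdsWithin_iff]
      exact ⟨hht, Eventually.of_forall fun n => hh0 n⟩
  have hmain := hasDerivAt_integral_of_dominated_loc_of_deriv_le (μ := μ)
    (F := fun z a => H a z) (F' := fun z a => deriv (H a) z) (bound := fun a => b a / (ε / 4))
    (x₀ := z₀) (ball_mem_nhds z₀ hr) ?_ ?_ hdm hbound (hb.div_const _) hderiv
  · exact hmain.2.differentiableAt.differentiableWithinAt
  · filter_upwards [hΩ.mem_nhds hz₀] with z hz using hmeas z hz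
  · refine Integrable.mono' hb (hmeas z₀ hz₀) ?_
    filter_upwards [hbd] with a ha using ha z₀ hz₀

/-- Osgood's lemma on `ℂ^D`. -/
lemma osgood {f : CSpc D → ℂ} {Ω : Set (CSpc D)} (hΩ : IsOpen Ω) (hf : ContinuousOn f Ω)
    (hd : ∀ (z : Fin D → ℂ) (i : Fin D),
      DifferentiableOn ℂ (fun ζ : ℂ => f (WithLp.toLp 2 (Function.update z i ζ)))
        {ζ | (WithLp.toLp 2 (Function.update z i ζ) : CSpc D) ∈ Ω}) :
    AnalyticOnNhd ℂ f Ω := by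
  intro c hc
  let e : CSpc D ≃L[ℂ] (Fin D → ℂ) := EuclideanSpace.equiv (Fin D) ℂ
  have hopen : IsOpen (e.symm ⁻¹' Ω) := hΩ.preimage e.symm.continuous
  have hmem : e c ∈ e.symm ⁻¹' Ω := by simpa using hc
  obtain ⟨ε, hε, hball⟩ := Metric.isOpen_iff.1 hopen _ hmem
  have hsub : closedBall (e c) (ε / 2) ⊆ e.symm ⁻¹' Ω :=
    (closedBall_subset_ball (by linarith)).trans hball
  have h1 : AnalyticAt ℂ (fun z : Fin D → ℂ => f (e.symm z)) (e c) := by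
    refine osgood_pi _ _ (ε / 2) (by linarith) ?_ ?_
    · exact hf.comp e.symm.continuous.continuousOn hsub
    · intro z hz i
      refine (hd z i).mono ?_
      intro ζ hζ
      refine hsub ?_
      rw [mem_closedBall, dist_pi_le_iff (by linarith)] at hz ⊢
      intro j
      by_cases hj : j = i
      · subst hj
        simpa using hζ
      · simpa [hj] using hz j
  have h2 : AnalyticAt ℂ (fun z => f (e.symm (e z))) c :=
    AnalyticAt.comp (g := fun z : Fin D → ℂ => f (e.symm z)) (f := e) h1 (e.analyticAt c)
  simpa using h2

/-- A dominated parametric integral of holomorphic functions on a domain of `ℂ^D` is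
holomorphic. -/
lemma analyticOnNhd_integral {α : Type*} [MeasurableSpace α] {μ : Measure α}
    {H : α → CSpc D → ℂ} {Ω : Set (CSpc D)} (hΩ : IsOpen Ω)
    (hmeas : ∀ z ∈ Ω, AEStronglyMeasurable (fun a => H a z) μ)
    (hd : ∀ᵐ a ∂μ, AnalyticOnNhd ℂ (H a) Ω) {b : α → ℝ} (hb : Integrable b μ)
    (hbd : ∀ᵐ a ∂μ, ∀ z ∈ Ω, ‖H a z‖ ≤ b a) :
    AnalyticOnNhd ℂ (fun z => ∫ a, H a z ∂μ) Ω := by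
  refine osgood hΩ ?_ ?_
  · refine continuousOn_of_dominated (bound := b) hmeas ?_ hb ?_
    · intro z hz
      filter_upwards [hbd] with a ha using ha z hz
    · filter_upwards [hd] with a ha using ha.continuousOn
  · intro z i
    have hline : Differentiable ℂ (fun ζ : ℂ => (WithLp.toLp 2 (Function.update z i ζ) : CSpc D)) := by
      have h1 : Differentiable ℂ (fun ζ : ℂ => Function.update z i ζ) := by
        intro ζ
        exact (hasFDerivAt_update z ζ).differentiableAt
      exact (EuclideanSpace.equiv (Fin D) ℂ).symm.differentiable.comp h1
    refine differentiableOn_integral (hΩ.preimage hline.continuous) (fun ζ hζ => hmeas _ hζ) ?_ hb ?_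
    · filter_upwards [hd] with a ha
      exact ha.differentiableOn.comp hline.differentiableOn (fun ζ hζ => hζ)
    · filter_upwards [hbd] with a ha ζ hζ using ha _ hζ

/-! ### Strips and entire kernels of Gaussian decay -/

/-- The real part of a point of `ℂ^D`. -/
def rePart (z : CSpc D) : Spc D := WithLp.toLp 2 fun j => (z j).re

@[simp] lemma rePart_apply (z : CSpc D) (j : Fin D) : rePart z j = (z j).re := rfl
@[simp] lemma imPart_apply (z : CSpc D) (j : Fin D) : imPart z j = (z j).im := rfl
@[simp] lemma toC_apply (x : Spc D) (j : Fin D) : toC x j = (x j : ℂ) := rfl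

lemma norm_sq_eq (z : CSpc D) : ‖z‖ ^ 2 = ‖rePart z‖ ^ 2 + ‖imPart z‖ ^ 2 := by
  rw [EuclideanSpace.norm_sq_eq, EuclideanSpace.norm_sq_eq, EuclideanSpace.norm_sq_eq,
    ← Finset.sum_add_distrib]
  refine Finset.sum_congr rfl fun j _ => ?_
  rw [Complex.sq_norm, Complex.normSq_apply, rePart_apply, imPart_apply, Real.norm_eq_abs,
    Real.norm_eq_abs, sq_abs, sq_abs]
  ring

lemma norm_rePart_le (z : CSpc D) : ‖rePart z‖ ≤ ‖z‖ := by
  have := norm_sq_eq z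
  nlinarith [norm_nonneg z, norm_nonneg (rePart z), sq_nonneg ‖imPart z‖]

lemma norm_imPart_le (z : CSpc D) : ‖imPart z‖ ≤ ‖z‖ := by
  have := norm_sq_eq z
  nlinarith [norm_nonneg z, norm_nonneg (imPart z), sq_nonneg ‖rePart z‖]

lemma norm_le_re_add_im (z : CSpc D) : ‖z‖ ≤ ‖rePart z‖ + ‖imPart z‖ := by
  have := norm_sq_eq z
  nlinarith [norm_nonneg z, norm_nonneg (imPart z), norm_nonneg (rePart z)]

lemma norm_coord_le (z : CSpc D) (j : Fin D) : ‖z j‖ ≤ ‖z‖ := PiLp.norm_apply_le z j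

lemma abs_coord_le (x : Spc D) (j : Fin D) : |x j| ≤ ‖x‖ := PiLp.norm_apply_le x j

@[simp] lemma imPart_toC (x : Spc D) : imPart (toC x) = 0 := by ext j; simp
@[simp] lemma rePart_toC (x : Spc D) : rePart (toC x) = x := by ext j; simp
lemma imPart_sub (z w : CSpc D) : imPart (z - w) = imPart z - imPart w := by ext j; simp
lemma rePart_sub (z w : CSpc D) : rePart (z - w) = rePart z - rePart w := by ext j; simp
lemma imPart_add (z w : CSpc D) : imPart (z + w) = imPart z + imPart w := by ext j; simp
lemma rePart_add (z w : CSpc D) : rePart (z + w) = rePart z + rePart w := by ext j; simp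
lemma imPart_smul (r : ℝ) (z : CSpc D) : imPart ((r : ℂ) • z) = r • imPart z := by ext j; simp
lemma rePart_smul (r : ℝ) (z : CSpc D) : rePart ((r : ℂ) • z) = r • rePart z := by ext j; simp
lemma imPart_smul_toC (θ : ℂ) (a : Spc D) : imPart (θ • toC a) = θ.im • a := by ext j; simp
lemma rePart_smul_toC (θ : ℂ) (a : Spc D) : rePart (θ • toC a) = θ.re • a := by ext j; simp

lemma continuous_toC : Continuous (toC : Spc D → CSpc D) := by
  refine (PiLp.continuous_toLp 2 _).comp ?_
  exact continuous_pi fun j => Complex.continuous_ofReal.comp (EuclideanSpace.proj j).continuous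

lemma continuous_imPart : Continuous (imPart : CSpc D → Spc D) := by
  refine (PiLp.continuous_toLp 2 _).comp ?_
  exact continuous_pi fun j => Complex.continuous_im.comp (EuclideanSpace.proj j).continuous

lemma norm_toC (x : Spc D) : ‖toC x‖ = ‖x‖ := by
  have := norm_sq_eq (toC x)
  simp only [rePart_toC, imPart_toC, norm_zero] at this
  nlinarith [norm_nonneg (toC x), norm_nonneg x]

/-- The open strip `{x + iy : |y| < R}`. -/
def ostrip (D : ℕ) (R : ℝ) : Set (CSpc D) := {z | ‖imPart z‖ < R}

lemma isOpen_ostrip (R : ℝ) : IsOpen (ostrip D R) :=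
  isOpen_lt continuous_imPart.norm continuous_const

lemma integrable_gauss {c : ℝ} (hc : 0 < c) :
    Integrable (fun w : Spc D => Real.exp (-c * ‖w‖ ^ 2)) := by
  have h := GaussianFourier.integrable_cexp_neg_mul_sq_norm_add (V := Spc D) (b := (c : ℂ))
    (by simpa using hc) 0 0
  refine h.norm.congr (Eventually.of_forall fun w => ?_)
  simp only [Complex.norm_exp]
  congr 1
  simp [← Complex.ofReal_pow, ← Complex.ofReal_mul]

/-- Entire functions with Gaussian decay in the real directions, uniformly on every strip. -/
structure GoodK (K : CSpc D → ℂ) : Prop where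
  an : AnalyticOnNhd ℂ K univ
  bd : ∃ c : ℝ, 0 < c ∧ ∀ L : ℝ, ∃ C : ℝ, 0 ≤ C ∧ ∀ z, ‖imPart z‖ ≤ L →
    ‖K z‖ ≤ C * Real.exp (-c * ‖rePart z‖ ^ 2)

lemma GoodK.cont {K : CSpc D → ℂ} (hK : GoodK K) : Continuous K :=
  continuousOn_univ.1 hK.an.continuousOn

lemma GoodK.add {K K' : CSpc D → ℂ} (hK : GoodK K) (hK' : GoodK K') :
    GoodK (fun z => K z + K' z) := by
  refine ⟨fun z hz => (hK.an z hz).fun_add (hK'.an z hz), ?_⟩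
  obtain ⟨c, hc, h⟩ := hK.bd
  obtain ⟨c', hc', h'⟩ := hK'.bd
  refine ⟨min c c', lt_min hc hc', fun L => ?_⟩
  obtain ⟨C, hC, hb⟩ := h L
  obtain ⟨C', hC', hb'⟩ := h' L
  refine ⟨C + C', by positivity, fun z hz => ?_⟩
  have h1 : Real.exp (-c * ‖rePart z‖ ^ 2) ≤ Real.exp (-(min c c') * ‖rePart z‖ ^ 2) := by
    apply Real.exp_le_exp.2
    nlinarith [min_le_left c c', sq_nonneg ‖rePart z‖]
  have h2 : Real.exp (-c' * ‖rePart z‖ ^ 2) ≤ Real.exp (-(min c c') * ‖rePart z‖ ^ 2) := by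
    apply Real.exp_le_exp.2
    nlinarith [min_le_right c c', sq_nonneg ‖rePart z‖]
  calc ‖K z + K' z‖ ≤ ‖K z‖ + ‖K' z‖ := norm_add_le _ _
    _ ≤ C * Real.exp (-c * ‖rePart z‖ ^ 2) + C' * Real.exp (-c' * ‖rePart z‖ ^ 2) :=
      add_le_add (hb z hz) (hb' z hz)
    _ ≤ C * Real.exp (-(min c c') * ‖rePart z‖ ^ 2)
        + C' * Real.exp (-(min c c') * ‖rePart z‖ ^ 2) := by gcongr
    _ = _ := by ring

lemma GoodK.const_mul {K : CSpc D → ℂ} (hK : GoodK K) (a : ℂ) : GoodK (fun z => a * K z) := by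
  refine ⟨fun z hz => analyticAt_const.fun_mul (hK.an z hz), ?_⟩
  obtain ⟨c, hc, h⟩ := hK.bd
  refine ⟨c, hc, fun L => ?_⟩
  obtain ⟨C, hC, hb⟩ := h L
  refine ⟨‖a‖ * C, by positivity, fun z hz => ?_⟩
  rw [norm_mul, mul_assoc]
  exact mul_le_mul_of_nonneg_left (hb z hz) (norm_nonneg _)

lemma GoodK.coord_mul {K : CSpc D → ℂ} (hK : GoodK K) (j : Fin D) :
    GoodK (fun z => z j * K z) := by
  refine ⟨fun z hz => AnalyticAt.fun_mul
    ((EuclideanSpace.proj (𝕜 := ℂ) j).analyticAt z) (hK.an z hz), ?_⟩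
  obtain ⟨c, hc, h⟩ := hK.bd
  refine ⟨c / 2, by positivity, fun L => ?_⟩
  obtain ⟨C, hC, hb⟩ := h L
  refine ⟨(1 + 2 / c + |L|) * C, by positivity, fun z hz => ?_⟩
  set u := ‖rePart z‖ with hu
  have hu0 : 0 ≤ u := norm_nonneg _
  have h1 : ‖z j‖ ≤ u + |L| :=
    (norm_coord_le z j).trans ((norm_le_re_add_im z).trans
      (add_le_add le_rfl (hz.trans (le_abs_self L))))
  have h2 : u ≤ (1 + 2 / c) * Real.exp (c / 2 * u ^ 2) := by
    have h3 : c / 2 * u ^ 2 + 1 ≤ Real.exp (c / 2 * u ^ 2) := Real.add_one_le_exp _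
    have h4 : u ≤ 1 + u ^ 2 := by nlinarith [sq_nonneg (u - 1)]
    have h5 : (1 + 2 / c) * (c / 2 * u ^ 2 + 1) = c / 2 * u ^ 2 + u ^ 2 + 1 + 2 / c := by
      field_simp; ring
    have h6 : (1 + 2 / c) * (c / 2 * u ^ 2 + 1) ≤ (1 + 2 / c) * Real.exp (c / 2 * u ^ 2) := by
      gcongr
    have h7 : 0 < 2 / c := by positivity
    have h8 : 0 ≤ c / 2 * u ^ 2 := by positivity
    linarith
  have h9 : |L| ≤ |L| * Real.exp (c / 2 * u ^ 2) :=
    le_mul_of_one_le_right (abs_nonneg _) (Real.one_le_exp (by positivity))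
  have h10 : Real.exp (-c * u ^ 2) = Real.exp (-(c / 2) * u ^ 2) * Real.exp (-(c / 2 * u ^ 2)) := by
    rw [← Real.exp_add]; congr 1; ring
  have h11 : Real.exp (c / 2 * u ^ 2) * Real.exp (-(c / 2 * u ^ 2)) = 1 := by
    rw [← Real.exp_add]; simp
  calc ‖z j * K z‖ = ‖z j‖ * ‖K z‖ := norm_mul _ _
    _ ≤ ((1 + 2 / c + |L|) * Real.exp (c / 2 * u ^ 2)) * (C * Real.exp (-c * u ^ 2)) := by
      refine mul_le_mul (h1.trans ?_) (hb z hz) (norm_nonneg _) (by positivity)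
      linarith
    _ = (1 + 2 / c + |L|) * C * Real.exp (-(c / 2) * u ^ 2)
        * (Real.exp (c / 2 * u ^ 2) * Real.exp (-(c / 2 * u ^ 2))) := by rw [h10]; ring
    _ = _ := by rw [h11, mul_one]

/-- `exp (-a (z₁² + ... + z_D²))`, the holomorphic extension of a Gaussian. -/
def cgauss (a : ℝ) (z : CSpc D) : ℂ := Complex.exp (-(a : ℂ) * ∑ j, z j ^ 2)

lemma norm_cgauss (a : ℝ) (z : CSpc D) :
    ‖cgauss a z‖ = Real.exp (-a * (‖rePart z‖ ^ 2 - ‖imPart z‖ ^ 2)) := by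
  rw [cgauss, Complex.norm_exp]
  congr 1
  rw [← Complex.ofReal_neg, Complex.re_ofReal_mul, Complex.re_sum, EuclideanSpace.norm_sq_eq,
    EuclideanSpace.norm_sq_eq, ← Finset.sum_sub_distrib]
  congr 1
  refine Finset.sum_congr rfl fun j _ => ?_
  simp [sq]

lemma cgauss_toC (a : ℝ) (x : Spc D) : cgauss a (toC x) = (Real.exp (-a * ‖x‖ ^ 2) : ℝ) := by
  rw [cgauss, EuclideanSpace.norm_sq_eq]
  push_cast
  congr 2
  refine Finset.sum_congr rfl fun j _ => ?_
  rw [toC_apply, Real.norm_eq_abs]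
  norm_cast
  rw [sq_abs]

lemma goodK_cgauss {a : ℝ} (ha : 0 < a) : GoodK (cgauss a : CSpc D → ℂ) := by
  refine ⟨?_, a, ha, fun L => ⟨Real.exp (a * L ^ 2), by positivity, fun z hz => ?_⟩⟩
  · have h : AnalyticOnNhd ℂ (fun z : CSpc D => ∑ j, z j ^ 2) univ := by
      refine Finset.analyticOnNhd_fun_sum _ fun j _ => ?_
      exact AnalyticOnNhd.fun_pow
        (fun z _ => (EuclideanSpace.proj (𝕜 := ℂ) j).analyticAt z) 2
    exact fun z hz => (analyticAt_const.fun_mul (h z hz)).cexp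
  · rw [norm_cgauss, ← Real.exp_add]
    apply Real.exp_le_exp.2
    have : ‖imPart z‖ ^ 2 ≤ L ^ 2 := pow_le_pow_left₀ (norm_nonneg _) hz 2
    nlinarith

/-- The `L¹` norms over the real slices `ℝ^D + iη`, `|η| ≤ 1`, are uniformly bounded. -/
lemma GoodK.exists_L1 {K : CSpc D → ℂ} (hK : GoodK K) :
    ∃ N : ℝ, 0 ≤ N ∧ ∀ η : Spc D, ‖η‖ ≤ 1 →
      ∫ ξ : Spc D, ‖K (toC ξ + Complex.I • toC η)‖ ≤ N := by
  obtain ⟨c, hc, h⟩ := hK.bd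
  obtain ⟨C, hC, hb⟩ := h 1
  refine ⟨∫ ξ : Spc D, C * Real.exp (-c * ‖ξ‖ ^ 2), integral_nonneg fun ξ => by positivity, ?_⟩
  intro η hη
  refine integral_mono_of_nonneg (Eventually.of_forall fun ξ => norm_nonneg _)
    ((integrable_gauss hc).const_mul C) (Eventually.of_forall fun ξ => ?_)
  have h1 := hb (toC ξ + Complex.I • toC η) (by simpa [imPart_add, imPart_smul_toC] using hη)
  simpa [rePart_add, rePart_smul_toC] using h1

/-- A Gaussian in `w` dominating `K(ρ(z - w))` for all `z` in a fixed ball. -/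
lemma GoodK.dominated {K : CSpc D → ℂ} (hK : GoodK K) {ρ : ℝ} (hρ : 0 < ρ) (R : ℝ) :
    ∃ C c : ℝ, 0 ≤ C ∧ 0 < c ∧ ∀ z : CSpc D, ‖z‖ ≤ R → ∀ w : Spc D,
      ‖K ((ρ : ℂ) • (z - toC w))‖ ≤ C * Real.exp (-c * ‖w‖ ^ 2) := by
  obtain ⟨c, hc, h⟩ := hK.bd
  obtain ⟨C, hC, hb⟩ := h (ρ * R)
  refine ⟨C * Real.exp (c * ρ ^ 2 * R ^ 2), c * ρ ^ 2 / 2, by positivity, by positivity, ?_⟩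
  intro z hz w
  have h1 := hb ((ρ : ℂ) • (z - toC w)) (by
    rw [imPart_smul, imPart_sub, imPart_toC, sub_zero, norm_smul, Real.norm_eq_abs, abs_of_pos hρ]
    exact mul_le_mul_of_nonneg_left ((norm_imPart_le z).trans hz) hρ.le)
  refine h1.trans ?_
  rw [mul_assoc, ← Real.exp_add]
  refine mul_le_mul_of_nonneg_left (Real.exp_le_exp.2 ?_) hC
  rw [rePart_smul, rePart_sub, rePart_toC, norm_smul, Real.norm_eq_abs, abs_of_pos hρ, mul_pow]
  have h2 : ‖w‖ ≤ ‖rePart z - w‖ + R := by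
    have : w = rePart z - (rePart z - w) := by abel
    calc ‖w‖ = ‖rePart z - (rePart z - w)‖ := by rw [← this]
      _ ≤ ‖rePart z‖ + ‖rePart z - w‖ := norm_sub_le _ _
      _ ≤ _ := by linarith [(norm_rePart_le z).trans hz]
  have h3 : ‖w‖ ^ 2 ≤ 2 * ‖rePart z - w‖ ^ 2 + 2 * R ^ 2 := by
    have := pow_le_pow_left₀ (norm_nonneg w) h2 2
    nlinarith [sq_nonneg (‖rePart z - w‖ - R)]
  have h4 : 0 < c * ρ ^ 2 := by positivity
  nlinarith

/-! ### Rescaled convolutions and contour shifts -/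

/-- The rescaled convolution `ρ^D ∫ K(ρ(z - w)) g(w) dw`, at complex points `z`. -/
def SS (K : CSpc D → ℂ) (ρ : ℝ) (g : Spc D → ℂ) (z : CSpc D) : ℂ :=
  (ρ : ℂ) ^ D * ∫ w, K ((ρ : ℂ) • (z - toC w)) * g w

lemma GoodK.cont_arg {K : CSpc D → ℂ} (hK : GoodK K) (ρ : ℝ) (z : CSpc D) :
    Continuous fun w : Spc D => K ((ρ : ℂ) • (z - toC w)) :=
  hK.cont.comp ((continuous_const.sub continuous_toC).const_smul (ρ : ℂ))

lemma GoodK.an_arg {K : CSpc D → ℂ} (hK : GoodK K) (ρ : ℝ) (w : CSpc D) (z : CSpc D) :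
    AnalyticAt ℂ (fun z : CSpc D => K ((ρ : ℂ) • (z - w))) z := by
  have h : AnalyticAt ℂ (fun z : CSpc D => (ρ : ℂ) • (z - w)) z :=
    analyticAt_const.fun_smul (analyticAt_id.fun_sub analyticAt_const)
  exact (hK.an ((ρ : ℂ) • (z - w)) (mem_univ _)).fun_comp_of_eq h rfl

lemma GoodK.integrable_mul {K : CSpc D → ℂ} (hK : GoodK K) {ρ : ℝ} (hρ : 0 < ρ)
    {g : Spc D → ℂ} (hg : AEStronglyMeasurable g) {M : ℝ} (hM : ∀ w, ‖g w‖ ≤ M) (z : CSpc D) :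
    Integrable fun w : Spc D => K ((ρ : ℂ) • (z - toC w)) * g w := by
  obtain ⟨C, c, hC, hc, hb⟩ := hK.dominated hρ ‖z‖
  refine Integrable.mono' (((integrable_gauss hc).const_mul C).mul_const M)
    ((hK.cont_arg ρ z).aestronglyMeasurable.mul hg) (Eventually.of_forall fun w => ?_)
  rw [norm_mul]
  exact mul_le_mul (hb z le_rfl w) (hM w) (norm_nonneg _) (by positivity)

lemma SS_analytic {K : CSpc D → ℂ} (hK : GoodK K) {ρ : ℝ} (hρ : 0 < ρ)
    {g : Spc D → ℂ} (hg : AEStronglyMeasurable g) {M : ℝ} (hM : ∀ w, ‖g w‖ ≤ M) :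
    AnalyticOnNhd ℂ (SS K ρ g) univ := by
  intro z₀ _
  obtain ⟨C, c, hC, hc, hb⟩ := hK.dominated hρ (‖z₀‖ + 1)
  have h : AnalyticOnNhd ℂ (fun z => ∫ w, K ((ρ : ℂ) • (z - toC w)) * g w) (ball z₀ 1) := by
    refine analyticOnNhd_integral (b := fun w => C * Real.exp (-c * ‖w‖ ^ 2) * M) isOpen_ball
      (fun z _ => (hK.cont_arg ρ z).aestronglyMeasurable.mul hg)
      (Eventually.of_forall fun w z _ => (hK.an_arg ρ (toC w) z).fun_mul analyticAt_const)
      (((integrable_gauss hc).const_mul C).mul_const M)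
      (Eventually.of_forall fun w z hz => ?_)
    rw [norm_mul]
    refine mul_le_mul (hb z ?_ w) (hM w) (norm_nonneg _) (by positivity)
    have := mem_ball_iff_norm.1 hz
    calc ‖z‖ = ‖z₀ + (z - z₀)‖ := by congr 1; abel
      _ ≤ ‖z₀‖ + ‖z - z₀‖ := norm_add_le _ _
      _ ≤ _ := by linarith
  exact analyticAt_const.fun_mul (h z₀ (mem_ball_self one_pos))

/-- Shift of the contour of integration `ℝ^D` to `ℝ^D + ia` inside the strip of
analyticity. The integral over `ℝ^D + θa` is holomorphic in `θ` and invariant under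
real translations of `θ`, hence constant. -/
lemma contour_shift {K : CSpc D → ℂ} (hK : GoodK K) {ρ : ℝ} (hρ : 0 < ρ)
    {g : CSpc D → ℂ} {R M : ℝ} (hg : AnalyticOnNhd ℂ g (ostrip D R))
    (hM : ∀ z ∈ ostrip D R, ‖g z‖ ≤ M) {a : Spc D} (ha : ‖a‖ < R) (z : CSpc D) :
    ∫ w : Spc D, K ((ρ : ℂ) • (z - toC w)) * g (toC w)
      = ∫ w : Spc D, K ((ρ : ℂ) • (z - (toC w + Complex.I • toC a)))
          * g (toC w + Complex.I • toC a) := by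
  set Φ : ℂ → ℂ := fun θ => ∫ w : Spc D, K ((ρ : ℂ) • (z - (toC w + θ • toC a)))
          * g (toC w + θ • toC a) with hΦ
  set Ω : Set ℂ := {θ : ℂ | ‖θ.im • a‖ < R} ∩ ball 0 2 with hΩ
  have hmemS : ∀ θ ∈ Ω, ∀ w : Spc D, toC w + θ • toC a ∈ ostrip D R := by
    intro θ hθ w
    have : imPart (toC w + θ • toC a) = θ.im • a := by
      rw [imPart_add, imPart_toC, imPart_smul_toC, zero_add]
    show ‖imPart _‖ < R
    rw [this]; exact hθ.1
  have hopen : IsOpen Ω := by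
    refine IsOpen.inter (isOpen_lt ?_ continuous_const) isOpen_ball
    exact (Complex.continuous_im.smul continuous_const).norm
  have hconv : Convex ℝ Ω := by
    refine Convex.inter ?_ (convex_ball 0 2)
    have h := (convex_ball (0 : Spc D) R).linear_preimage
      (Complex.imLm.smulRight a : ℂ →ₗ[ℝ] Spc D)
    have he : {θ : ℂ | ‖θ.im • a‖ < R}
        = (Complex.imLm.smulRight a : ℂ →ₗ[ℝ] Spc D) ⁻¹' ball 0 R := by
      ext θ
      simp
    rw [he]
    exact h
  have h0 : (0 : ℂ) ∈ Ω := by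
    constructor
    · have : 0 < R := (norm_nonneg a).trans_lt ha
      simpa using this
    · simp
  have hI : Complex.I ∈ Ω := ⟨by simpa using ha, by simp⟩
  have hM0 : 0 ≤ M := (norm_nonneg _).trans (hM _ (hmemS 0 h0 0))
  have hdiff : DifferentiableOn ℂ Φ Ω := by
    obtain ⟨C, c, hC, hc, hb⟩ := hK.dominated hρ (‖z‖ + 2 * ‖a‖)
    have hcont : ∀ θ : ℂ, Continuous fun w : Spc D => toC w + θ • toC a := fun θ =>
      continuous_toC.add continuous_const
    refine differentiableOn_integral (b := fun w => C * Real.exp (-c * ‖w‖ ^ 2) * M) hopen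
      (fun θ hθ => ?_) (Eventually.of_forall fun w θ hθ => ?_)
      (((integrable_gauss hc).const_mul C).mul_const M)
      (Eventually.of_forall fun w θ hθ => ?_)
    · refine Continuous.aestronglyMeasurable (Continuous.mul ?_ ?_)
      · exact hK.cont.comp ((continuous_const.sub (hcont θ)).const_smul (ρ : ℂ))
      · exact hg.continuousOn.comp_continuous (hcont θ) (hmemS θ hθ)
    · have hlin : AnalyticAt ℂ (fun θ : ℂ => toC w + θ • toC a) θ :=
        analyticAt_const.fun_add (analyticAt_id.fun_smul analyticAt_const)
      have h1 : AnalyticAt ℂ (fun θ : ℂ => g (toC w + θ • toC a)) θ :=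
        (hg _ (hmemS θ hθ w)).fun_comp_of_eq hlin rfl
      have h2 : AnalyticAt ℂ (fun θ : ℂ => (ρ : ℂ) • (z - (toC w + θ • toC a))) θ :=
        analyticAt_const.fun_smul (analyticAt_const.fun_sub hlin)
      have h3 : AnalyticAt ℂ (fun θ : ℂ => K ((ρ : ℂ) • (z - (toC w + θ • toC a)))) θ :=
        (hK.an _ (mem_univ _)).fun_comp_of_eq h2 rfl
      exact (h3.fun_mul h1).differentiableAt.differentiableWithinAt
    · rw [norm_mul]
      refine mul_le_mul ?_ (hM _ (hmemS θ hθ w)) (norm_nonneg _) (by positivity)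
      have h1 : z - (toC w + θ • toC a) = (z - θ • toC a) - toC w := by abel
      rw [h1]
      refine hb _ ((norm_sub_le _ _).trans ?_) w
      rw [norm_smul, norm_toC]
      have : ‖θ‖ < 2 := by simpa using hθ.2
      have := mul_le_mul_of_nonneg_right this.le (norm_nonneg a)
      linarith
  have hinv : ∀ (θ : ℂ) (η : ℝ), Φ (θ + η) = Φ θ := by
    intro θ η
    have h1 : ∀ w : Spc D, toC w + (θ + (η : ℂ)) • toC a = toC (w + η • a) + θ • toC a := by
      intro w; ext j; simp; ring
    simp only [hΦ, h1]
    exact integral_add_right_eq_self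
      (fun w => K ((ρ : ℂ) • (z - (toC w + θ • toC a))) * g (toC w + θ • toC a)) (η • a)
  have hder : ∀ θ ∈ Ω, deriv Φ θ = 0 := by
    intro θ hθ
    have h1 : HasDerivAt Φ (deriv Φ θ) θ :=
      (hdiff.differentiableAt (hopen.mem_nhds hθ)).hasDerivAt
    have h2 : HasDerivAt (fun η : ℂ => Φ (θ + η)) (deriv Φ θ) ((0 : ℝ) : ℂ) := by
      have h1' : HasDerivAt Φ (deriv Φ θ) (θ + ((0 : ℝ) : ℂ)) := by simpa using h1
      exact h1'.comp_const_add θ _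
    have h3 := h2.comp_ofReal
    have h4 : (fun η : ℝ => Φ (θ + (η : ℂ))) = fun _ => Φ θ := funext fun η => hinv θ η
    rw [h4] at h3
    exact h3.unique (hasDerivAt_const _ _)
  have hconst := hopen.is_const_of_deriv_eq_zero hconv.isPreconnected hdiff
    (fun θ hθ => hder θ hθ) h0 hI
  simpa [hΦ] using hconst

/-- The `L¹` norm of the rescaled kernel along the contour `ℝ^D + ia`. -/
lemma L1_scale {K : CSpc D → ℂ} {N : ℝ}
    (hN : ∀ η : Spc D, ‖η‖ ≤ 1 → ∫ ξ : Spc D, ‖K (toC ξ + Complex.I • toC η)‖ ≤ N)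
    {ρ : ℝ} (hρ : 0 < ρ) {z : CSpc D} {a : Spc D} (hza : ρ * ‖imPart z - a‖ ≤ 1) :
    ρ ^ D * ∫ w : Spc D, ‖K ((ρ : ℂ) • (z - (toC w + Complex.I • toC a)))‖ ≤ N := by
  set f : Spc D → ℝ := fun ξ => ‖K (toC ξ + Complex.I • toC (ρ • (imPart z - a)))‖ with hf
  have h1 : ∀ w : Spc D, ‖K ((ρ : ℂ) • (z - (toC w + Complex.I • toC a)))‖
      = f (ρ • (rePart z - w)) := by
    intro w
    simp only [hf]
    congr 2
    ext j
    apply Complex.ext <;> simp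
  simp only [h1]
  have h2 := integral_sub_left_eq_self (fun w => f (ρ • w)) (volume : Measure (Spc D)) (rePart z)
  rw [h2, Measure.integral_comp_smul]
  simp only [finrank_euclideanSpace, Fintype.card_fin, smul_eq_mul]
  rw [abs_of_pos (by positivity), ← mul_assoc, mul_inv_cancel₀ (by positivity), one_mul]
  refine hN _ ?_
  rwa [norm_smul, Real.norm_eq_abs, abs_of_pos hρ]

/-- The convolution estimate obtained by moving the contour to `ℝ^D + ia`. -/
lemma SS_bound {K : CSpc D → ℂ} (hK : GoodK K) {N : ℝ}
    (hN : ∀ η : Spc D, ‖η‖ ≤ 1 → ∫ ξ : Spc D, ‖K (toC ξ + Complex.I • toC η)‖ ≤ N)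
    {ρ : ℝ} (hρ : 0 < ρ) {g : CSpc D → ℂ} {R M : ℝ} (hg : AnalyticOnNhd ℂ g (ostrip D R))
    (hM : ∀ z ∈ ostrip D R, ‖g z‖ ≤ M) {a : Spc D} (ha : ‖a‖ < R) {z : CSpc D}
    (hza : ρ * ‖imPart z - a‖ ≤ 1) :
    ‖SS K ρ (fun w => g (toC w)) z‖ ≤ N * M := by
  have hmem : ∀ w : Spc D, toC w + Complex.I • toC a ∈ ostrip D R := by
    intro w
    show ‖imPart _‖ < R
    rw [imPart_add, imPart_toC, imPart_smul_toC, zero_add]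
    simpa using ha
  have hM0 : 0 ≤ M := (norm_nonneg _).trans (hM _ (hmem 0))
  rw [SS, contour_shift hK hρ hg hM ha z, norm_mul, norm_pow, Complex.norm_real,
    Real.norm_eq_abs, abs_of_pos hρ]
  have hintg : Integrable fun w : Spc D =>
      ‖K ((ρ : ℂ) • (z - (toC w + Complex.I • toC a)))‖ * M := by
    have := hK.integrable_mul hρ (g := fun _ => 1) aestronglyMeasurable_const (M := 1)
      (by simp) (z - Complex.I • toC a)
    simp only [mul_one] at this
    refine (this.norm.mul_const M).congr (Eventually.of_forall fun w => ?_)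
    simp only
    congr 4
    abel
  calc ρ ^ D * ‖∫ w : Spc D, K ((ρ : ℂ) • (z - (toC w + Complex.I • toC a)))
          * g (toC w + Complex.I • toC a)‖
      ≤ ρ ^ D * ∫ w : Spc D, ‖K ((ρ : ℂ) • (z - (toC w + Complex.I • toC a)))‖ * M := by
        refine mul_le_mul_of_nonneg_left ?_ (by positivity)
        refine norm_integral_le_of_norm_le hintg (Eventually.of_forall fun w => ?_)
        rw [norm_mul]
        exact mul_le_mul_of_nonneg_left (hM _ (hmem w)) (norm_nonneg _)
    _ = (ρ ^ D * ∫ w : Spc D, ‖K ((ρ : ℂ) • (z - (toC w + Complex.I • toC a)))‖) * M := by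
        rw [integral_mul_const]; ring
    _ ≤ N * M := mul_le_mul_of_nonneg_right (L1_scale hN hρ hza) hM0

/-- The convolution estimate without a contour shift, for data given on `ℝ^D` only. -/
lemma SS_bound_real {K : CSpc D → ℂ} (hK : GoodK K) {N : ℝ}
    (hN : ∀ η : Spc D, ‖η‖ ≤ 1 → ∫ ξ : Spc D, ‖K (toC ξ + Complex.I • toC η)‖ ≤ N)
    {ρ : ℝ} (hρ : 0 < ρ) {g : Spc D → ℂ} {M : ℝ}
    (hM : ∀ w, ‖g w‖ ≤ M) {z : CSpc D} (hza : ρ * ‖imPart z‖ ≤ 1) :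
    ‖SS K ρ g z‖ ≤ N * M := by
  have hM0 : 0 ≤ M := (norm_nonneg _).trans (hM 0)
  rw [SS, norm_mul, norm_pow, Complex.norm_real, Real.norm_eq_abs, abs_of_pos hρ]
  have hintg : Integrable fun w : Spc D => ‖K ((ρ : ℂ) • (z - toC w))‖ * M := by
    have := hK.integrable_mul hρ (g := fun _ => 1) aestronglyMeasurable_const (M := 1)
      (by simp) z
    simp only [mul_one] at this
    exact this.norm.mul_const M
  have h0 : (toC (0 : Spc D)) = 0 := by ext j; simp
  have hL := L1_scale hN hρ (z := z) (a := 0) (by simpa using hza)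
  simp only [h0, smul_zero, add_zero] at hL
  calc ρ ^ D * ‖∫ w : Spc D, K ((ρ : ℂ) • (z - toC w)) * g w‖
      ≤ ρ ^ D * ∫ w : Spc D, ‖K ((ρ : ℂ) • (z - toC w))‖ * M := by
        refine mul_le_mul_of_nonneg_left ?_ (by positivity)
        refine norm_integral_le_of_norm_le hintg (Eventually.of_forall fun w => ?_)
        rw [norm_mul]
        exact mul_le_mul_of_nonneg_left (hM w) (norm_nonneg _)
    _ = (ρ ^ D * ∫ w : Spc D, ‖K ((ρ : ℂ) • (z - toC w))‖) * M := by
        rw [integral_mul_const]; ring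
    _ ≤ N * M := mul_le_mul_of_nonneg_right hL hM0

/-! ### Bounded mean oscillation against Gaussians -/

/-- A Gaussian at distance `u` is bounded by a rapidly decaying power of `2^k` for some dyadic
scale `2^k` exceeding `u`. -/
lemma dyadic_gauss (D : ℕ) {c : ℝ} (hc : 0 < c) :
    ∃ C : ℝ, 0 < C ∧ ∀ u : ℝ, 0 ≤ u → ∃ k : ℕ, u < 2 ^ k ∧
      Real.exp (-c * u ^ 2) ≤ C * ((4 : ℝ) ^ k)⁻¹ ^ (D + 1) := by
  refine ⟨1 + (D + 1).factorial * (4 / c) ^ (D + 1), by positivity, fun u hu => ?_⟩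
  have hex : ∃ k : ℕ, u < 2 ^ k := pow_unbounded_of_one_lt u one_lt_two
  classical
  obtain hk := Nat.find_spec hex
  refine ⟨Nat.find hex, hk, ?_⟩
  rcases Nat.eq_zero_or_pos (Nat.find hex) with h0 | h0
  · rw [h0]
    have : Real.exp (-c * u ^ 2) ≤ 1 := by
      apply Real.exp_le_one_iff.2; nlinarith [mul_nonneg hc.le (sq_nonneg u)]
    have h2 : 0 ≤ (D + 1).factorial * (4 / c) ^ (D + 1) := by positivity
    simp only [pow_zero, inv_one, one_pow, mul_one]
    linarith
  · obtain ⟨m, hm⟩ : ∃ m, Nat.find hex = m + 1 := ⟨Nat.find hex - 1, by omega⟩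
    have h1 : (2 : ℝ) ^ m ≤ u := by
      have := Nat.find_min hex (m := m) (by omega)
      simpa using this
    have hupos : 0 < u := lt_of_lt_of_le (by positivity) h1
    rw [hm]
    have h2 := Real.pow_div_factorial_le_exp (x := c * u ^ 2) (by positivity) (D + 1)
    have h3 : Real.exp (-c * u ^ 2) = (Real.exp (c * u ^ 2))⁻¹ := by
      rw [← Real.exp_neg]; congr 1; ring
    have h4 : (4 : ℝ) ^ m ≤ u ^ 2 := by
      calc (4 : ℝ) ^ m = ((2 : ℝ) ^ m) ^ 2 := by rw [← pow_mul, mul_comm, pow_mul]; norm_num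
        _ ≤ u ^ 2 := pow_le_pow_left₀ (by positivity) h1 2
    have h5 : (c * 4 ^ m) ^ (D + 1) / (D + 1).factorial ≤ Real.exp (c * u ^ 2) := by
      refine le_trans ?_ h2
      gcongr
    rw [h3]
    calc (Real.exp (c * u ^ 2))⁻¹ ≤ ((c * 4 ^ m) ^ (D + 1) / (D + 1).factorial)⁻¹ :=
          inv_anti₀ (by positivity) h5
      _ = (D + 1).factorial * (4 / c) ^ (D + 1) * ((4 : ℝ) ^ (m + 1))⁻¹ ^ (D + 1) := by
          rw [inv_div, mul_pow, inv_pow, div_pow, pow_succ (4 : ℝ) m, mul_pow]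
          field_simp
      _ ≤ _ := by
          gcongr
          linarith

lemma measureReal_ball_pos (x : Spc D) {r : ℝ} (hr : 0 < r) : 0 < volume.real (ball x r) :=
  ENNReal.toReal_pos (measure_ball_pos volume x hr).ne' measure_ball_lt_top.ne

lemma measureReal_ball (x : Spc D) {r : ℝ} (hr : 0 < r) :
    volume.real (ball x r) = r ^ D * volume.real (ball (0 : Spc D) 1) := by
  rw [measureReal_def, Measure.addHaar_ball_of_pos _ _ hr, ENNReal.toReal_mul,
    ENNReal.toReal_ofReal (by positivity), finrank_euclideanSpace, Fintype.card_fin,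
    measureReal_def]

/-- Means over concentric balls, doubling the radius: the mean oscillation about the mean of
the smallest ball grows at most linearly in the number of doublings. -/
lemma bmo_dyadic {f : Spc D → ℝ} (hf : LocallyIntegrable f volume) {Mb : ℝ}
    (hMb : ∀ v ∈ oscSet f, v ≤ Mb) (x : Spc D) {R : ℝ} (hR : 0 < R) (k : ℕ) :
    ∫ y in ball x (2 ^ k * R), |f y - ⨍ z in ball x R, f z|
      ≤ volume.real (ball x (2 ^ k * R)) * ((1 + k * 2 ^ D) * Mb) := by
  set m : ℕ → ℝ := fun k => ⨍ z in ball x (2 ^ k * R), f z with hm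
  have hRk : ∀ k : ℕ, 0 < 2 ^ k * R := fun k => by positivity
  have hintg : ∀ (k : ℕ) (a : ℝ), IntegrableOn (fun y => |f y - a|) (ball x (2 ^ k * R)) := by
    intro k a
    have h1 : IntegrableOn f (ball x (2 ^ k * R)) :=
      (hf.integrableOn_isCompact (isCompact_closedBall x (2 ^ k * R))).mono_set ball_subset_closedBall
    exact (h1.sub (integrableOn_const measure_ball_lt_top.ne)).abs
  have hvol := fun k => measureReal_ball_pos x (hRk k)
  have hosc : ∀ k, ∫ y in ball x (2 ^ k * R), |f y - m k|
      ≤ volume.real (ball x (2 ^ k * R)) * Mb := by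
    intro k
    have := hMb _ ⟨x, 2 ^ k * R, hRk k, rfl⟩
    rw [setAverage_eq, smul_eq_mul, inv_mul_le_iff₀ (hvol k)] at this
    exact this
  have hstep : ∀ k, |m k - m (k + 1)| ≤ 2 ^ D * Mb := by
    intro k
    have h1 : IntegrableOn f (ball x (2 ^ k * R)) :=
      (hf.integrableOn_isCompact (isCompact_closedBall x (2 ^ k * R))).mono_set ball_subset_closedBall
    have h2 : m k - m (k + 1)
        = (volume.real (ball x (2 ^ k * R)))⁻¹ * ∫ y in ball x (2 ^ k * R), (f y - m (k + 1)) := by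
      rw [integral_sub h1 (integrableOn_const measure_ball_lt_top.ne), setIntegral_const, smul_eq_mul]
      simp only [hm]
      rw [setAverage_eq, smul_eq_mul]
      have := (hvol k).ne'
      field_simp
    have hsub : ball x (2 ^ k * R) ⊆ ball x (2 ^ (k + 1) * R) := by
      apply ball_subset_ball
      rw [pow_succ]; nlinarith [hRk k]
    rw [h2, abs_mul, abs_of_pos (inv_pos.2 (hvol k)), inv_mul_le_iff₀ (hvol k)]
    calc |∫ y in ball x (2 ^ k * R), (f y - m (k + 1))|
        ≤ ∫ y in ball x (2 ^ k * R), |f y - m (k + 1)| := abs_integral_le_integral_abs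
      _ ≤ ∫ y in ball x (2 ^ (k + 1) * R), |f y - m (k + 1)| :=
          setIntegral_mono_set (hintg (k + 1) _) (Eventually.of_forall fun y => abs_nonneg _)
            hsub.eventuallyLE
      _ ≤ volume.real (ball x (2 ^ (k + 1) * R)) * Mb := hosc (k + 1)
      _ = volume.real (ball x (2 ^ k * R)) * (2 ^ D * Mb) := by
          rw [measureReal_ball x (hRk _), measureReal_ball x (hRk _), pow_succ, mul_pow, mul_pow,
            mul_pow]
          ring
  have hdist : ∀ k : ℕ, |m k - m 0| ≤ k * (2 ^ D * Mb) := by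
    intro k
    induction k with
    | zero => simp
    | succ k ih =>
      have h1 : m (k + 1) - m 0 = (m k - m 0) - (m k - m (k + 1)) := by ring
      rw [h1]
      refine (abs_sub _ _).trans ?_
      push_cast
      linarith [hstep k]
  have hm0 : (⨍ z in ball x R, f z) = m 0 := by simp [hm]
  rw [hm0]
  calc ∫ y in ball x (2 ^ k * R), |f y - m 0|
      ≤ ∫ y in ball x (2 ^ k * R), (|f y - m k| + |m k - m 0|) := by
        refine setIntegral_mono (hintg k _)
          ((hintg k _).add (integrableOn_const measure_ball_lt_top.ne)) fun y => ?_
        exact abs_sub_le _ _ _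
    _ = (∫ y in ball x (2 ^ k * R), |f y - m k|)
        + volume.real (ball x (2 ^ k * R)) * |m k - m 0| := by
        rw [integral_add (hintg k _) (integrableOn_const measure_ball_lt_top.ne), setIntegral_const,
          smul_eq_mul]
    _ ≤ volume.real (ball x (2 ^ k * R)) * Mb
        + volume.real (ball x (2 ^ k * R)) * (k * (2 ^ D * Mb)) := by
        have := hosc k
        have := mul_le_mul_of_nonneg_left (hdist k) (hvol k).le
        linarith
    _ = _ := by ring

/-- A function of bounded mean oscillation, minus its mean over the ball of radius `R`, integrates
against a Gaussian of width `R` to `O(R^D)`. -/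
lemma bmo_gauss {f : Spc D → ℝ} (hf : IsBMO f) {c : ℝ} (hc : 0 < c) (x : Spc D) :
    ∃ Cb : ℝ, 0 ≤ Cb ∧ ∀ R : ℝ, 0 < R → ∃ m : ℝ,
      Integrable (fun w => |f w - m| * Real.exp (-c * (‖x - w‖ / R) ^ 2)) ∧
      ∫ w, |f w - m| * Real.exp (-c * (‖x - w‖ / R) ^ 2) ≤ Cb * R ^ D := by
  obtain ⟨hloc, Mb, hMb⟩ := hf
  have hMb' : ∀ v ∈ oscSet f, v ≤ Mb := fun v hv => hMb hv
  have hMb0 : 0 ≤ Mb := by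
    have h := hMb' _ ⟨x, 1, one_pos, rfl⟩
    refine le_trans ?_ h
    rw [setAverage_eq, smul_eq_mul]
    exact mul_nonneg (inv_nonneg.2 measureReal_nonneg) (integral_nonneg fun y => abs_nonneg _)
  obtain ⟨C, hC, hdy⟩ := dyadic_gauss D hc
  set v := volume.real (ball (0 : Spc D) 1) with hv
  have hv0 : 0 ≤ v := measureReal_nonneg
  -- the series dominating the Gaussian integral, with the factor `R ^ D` removed
  set β : ℕ → ℝ := fun k => C * ((4 : ℝ) ^ k)⁻¹ ^ (D + 1) * ((2 ^ k) ^ D * v *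
    ((1 + k * 2 ^ D) * Mb)) with hβ
  have hβ0 : ∀ k, 0 ≤ β k := fun k => by positivity
  have hβs : Summable β := by
    have hs1 : Summable fun k : ℕ => ((4 : ℝ)⁻¹) ^ k :=
      summable_geometric_of_lt_one (by norm_num) (by norm_num)
    have hs2 : Summable fun k : ℕ => (k : ℝ) ^ 1 * ((4 : ℝ)⁻¹) ^ k :=
      summable_pow_mul_geometric_of_norm_lt_one 1 (by rw [norm_inv]; norm_num)
    have hs := (hs1.add (hs2.mul_right ((2 : ℝ) ^ D))).mul_left (C * v * Mb)
    refine Summable.of_nonneg_of_le hβ0 (fun k => ?_) hs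
    have h1 : ((4 : ℝ) ^ k)⁻¹ ^ (D + 1) * (2 ^ k) ^ D ≤ ((4 : ℝ)⁻¹) ^ k := by
      have h2 : ((4 : ℝ) ^ k)⁻¹ ^ D * (2 ^ k) ^ D ≤ 1 := by
        rw [← mul_pow]
        refine pow_le_one₀ (by positivity) ?_
        rw [inv_mul_le_iff₀ (by positivity), mul_one]
        exact pow_le_pow_left₀ (by norm_num) (by norm_num) k
      rw [pow_succ, inv_pow 4 k]
      calc _ = (((4 : ℝ) ^ k)⁻¹ ^ D * (2 ^ k) ^ D) * ((4 : ℝ) ^ k)⁻¹ := by ring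
        _ ≤ 1 * ((4 : ℝ) ^ k)⁻¹ := by gcongr
        _ = _ := one_mul _
    calc β k = (C * v * Mb * (1 + k * 2 ^ D)) * (((4 : ℝ) ^ k)⁻¹ ^ (D + 1) * (2 ^ k) ^ D) := by
          simp only [hβ]; ring
      _ ≤ (C * v * Mb * (1 + k * 2 ^ D)) * ((4 : ℝ)⁻¹) ^ k := by gcongr
      _ = _ := by ring
  refine ⟨∑' k, β k, tsum_nonneg hβ0, fun R hR => ?_⟩
  set m := ⨍ z in ball x R, f z with hm
  refine ⟨m, ?_⟩
  set F : Spc D → ℝ := fun w => |f w - m| * Real.exp (-c * (‖x - w‖ / R) ^ 2) with hF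
  have hF0 : ∀ w, 0 ≤ F w := fun w => by positivity
  have hFm : AEStronglyMeasurable F := by
    refine AEStronglyMeasurable.mul
      (hloc.aestronglyMeasurable.sub aestronglyMeasurable_const).norm ?_
    exact Continuous.aestronglyMeasurable (by fun_prop)
  have hfm : AEMeasurable (fun w => ENNReal.ofReal |f w - m|) :=
    ((hloc.aestronglyMeasurable.sub aestronglyMeasurable_const).norm.aemeasurable).ennreal_ofReal
  have hlin : ∫⁻ w, ENNReal.ofReal (F w) ≤ ENNReal.ofReal ((∑' k, β k) * R ^ D) := by
    calc ∫⁻ w, ENNReal.ofReal (F w)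
        ≤ ∫⁻ w, ∑' k : ℕ, (ball x (2 ^ k * R)).indicator
            (fun w => ENNReal.ofReal (C * ((4 : ℝ) ^ k)⁻¹ ^ (D + 1))
              * ENNReal.ofReal |f w - m|) w := by
          refine lintegral_mono fun w => ?_
          obtain ⟨k, hk, hk'⟩ := hdy (‖x - w‖ / R) (by positivity)
          refine le_trans ?_ (ENNReal.le_tsum k)
          rw [indicator_of_mem, ← ENNReal.ofReal_mul (by positivity)]
          · apply ENNReal.ofReal_le_ofReal
            rw [mul_comm _ |f w - m|]
            exact mul_le_mul_of_nonneg_left hk' (abs_nonneg _)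
          · rw [mem_ball, dist_comm, dist_eq_norm]
            exact (div_lt_iff₀ hR).1 hk
      _ = ∑' k : ℕ, ∫⁻ w, (ball x (2 ^ k * R)).indicator
            (fun w => ENNReal.ofReal (C * ((4 : ℝ) ^ k)⁻¹ ^ (D + 1))
              * ENNReal.ofReal |f w - m|) w :=
          lintegral_tsum fun k => (hfm.const_mul _).indicator measurableSet_ball
      _ ≤ ∑' k : ℕ, ENNReal.ofReal (β k * R ^ D) := by
          refine ENNReal.tsum_le_tsum fun k => ?_
          rw [lintegral_indicator measurableSet_ball, lintegral_const_mul'' _ hfm.restrict]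
          have hi : IntegrableOn (fun w => |f w - m|) (ball x (2 ^ k * R)) := by
            have h1 : IntegrableOn f (ball x (2 ^ k * R)) :=
              (hloc.integrableOn_isCompact (isCompact_closedBall x (2 ^ k * R))).mono_set
                ball_subset_closedBall
            exact (h1.sub (integrableOn_const measure_ball_lt_top.ne)).abs
          rw [← ofReal_integral_eq_lintegral_ofReal hi
            (Eventually.of_forall fun w => abs_nonneg _), ← ENNReal.ofReal_mul (by positivity)]
          apply ENNReal.ofReal_le_ofReal
          have h2 := bmo_dyadic hloc hMb' x hR k
          rw [measureReal_ball x (by positivity)] at h2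
          refine (mul_le_mul_of_nonneg_left h2 (by positivity)).trans (le_of_eq ?_)
          simp only [hβ, mul_pow]
          ring
      _ = ENNReal.ofReal ((∑' k, β k) * R ^ D) := by
          rw [← tsum_mul_right, ENNReal.ofReal_tsum_of_nonneg (fun k => mul_nonneg (hβ0 k)
            (by positivity)) (hβs.mul_right _)]
  have hFi : Integrable F := by
    refine ⟨hFm, ?_⟩
    rw [hasFiniteIntegral_iff_ofReal (Eventually.of_forall hF0)]
    exact hlin.trans_lt ENNReal.ofReal_lt_top
  refine ⟨hFi, ?_⟩
  rw [← ofReal_integral_eq_lintegral_ofReal hFi (Eventually.of_forall hF0)] at hlin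
  exact (ENNReal.ofReal_le_ofReal_iff (mul_nonneg (tsum_nonneg hβ0) (by positivity))).1 hlin

/-! ### Gaussians as Schwartz functions -/

lemma poly_gauss {a : ℝ} (ha : 0 < a) (p : ℕ) {u : ℝ} (hu : 0 ≤ u) :
    (1 + u) ^ p * Real.exp (-a * u ^ 2) ≤ p.factorial * Real.exp (1 + 1 / (4 * a)) := by
  have h1 := Real.pow_div_factorial_le_exp (x := 1 + u) (by positivity) p
  rw [div_le_iff₀ (by positivity)] at h1
  have h2 : u ≤ a * u ^ 2 + 1 / (4 * a) := by
    have : a * u ^ 2 + 1 / (4 * a) - u = a * (u - 1 / (2 * a)) ^ 2 := by field_simp; ring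
    nlinarith [mul_nonneg ha.le (sq_nonneg (u - 1 / (2 * a)))]
  calc (1 + u) ^ p * Real.exp (-a * u ^ 2)
      ≤ (Real.exp (1 + u) * p.factorial) * Real.exp (-a * u ^ 2) := by gcongr
    _ = p.factorial * Real.exp (1 + u + -a * u ^ 2) := by rw [Real.exp_add (1 + u)]; ring
    _ ≤ _ := by
        refine mul_le_mul_of_nonneg_left (Real.exp_le_exp.2 ?_) (by positivity)
        linarith

lemma temperate_centered (x : Spc D) (a : ℝ) :
    Function.HasTemperateGrowth (fun w : Spc D => -a * ‖x - w‖ ^ 2) := by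
  have h1 : Function.HasTemperateGrowth (fun w : Spc D => x - w) :=
    (Function.HasTemperateGrowth.const x).sub Function.HasTemperateGrowth.id'
  have h2 : Function.HasTemperateGrowth (fun w : Spc D => ‖x - w‖ ^ 2) :=
    (Function.hasTemperateGrowth_norm_sq (Spc D)).comp h1
  exact (Function.HasTemperateGrowth.const (-a)).mul h2

/-- Gaussians are Schwartz functions. -/
lemma exists_schwartz_gauss (x : Spc D) {a : ℝ} (ha : 0 < a) :
    ∃ φ : SchwartzMap (Spc D) ℝ, ∀ w, φ w = Real.exp (-a * ‖x - w‖ ^ 2) := by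
  have htg := temperate_centered x a
  refine ⟨⟨fun w => Real.exp (-a * ‖x - w‖ ^ 2), Real.contDiff_exp.comp htg.1, ?_⟩, fun w => rfl⟩
  intro k n
  obtain ⟨p, C, hC, hb⟩ := htg.norm_iteratedFDeriv_le_uniform n
  refine ⟨n.factorial * (1 + C) ^ n * (1 + ‖x‖) ^ (p * n + k)
    * ((p * n + k).factorial * Real.exp (1 + 1 / (4 * a))), fun w => ?_⟩
  set E := Real.exp (-a * ‖x - w‖ ^ 2) with hE
  have h1 : ‖iteratedFDeriv ℝ n (Real.exp ∘ fun w : Spc D => -a * ‖x - w‖ ^ 2) w‖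
      ≤ n.factorial * E * ((1 + C) * (1 + ‖w‖) ^ p) ^ n := by
    refine norm_iteratedFDeriv_comp_le (N := (n : ℕ∞)) Real.contDiff_exp
      (htg.1.of_le (by exact_mod_cast le_top)) le_rfl w ?_ ?_
    · intro i _
      rw [norm_iteratedFDeriv_eq_norm_iteratedDeriv, iteratedDeriv_eq_iterate, Real.iter_deriv_exp,
        Real.norm_eq_abs, abs_of_pos (Real.exp_pos _)]
    · intro i hi hin
      have h2 : 1 ≤ (1 + C) * (1 + ‖w‖) ^ p :=
        one_le_mul_of_one_le_of_one_le (by linarith) (one_le_pow₀ (by linarith [norm_nonneg w]))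
      calc _ ≤ C * (1 + ‖w‖) ^ p := hb i hin w
        _ ≤ (1 + C) * (1 + ‖w‖) ^ p := by gcongr; linarith
        _ ≤ _ := le_self_pow₀ h2 (by omega)
  have h3 : 1 + ‖w‖ ≤ (1 + ‖x‖) * (1 + ‖x - w‖) := by
    have : ‖w‖ ≤ ‖x‖ + ‖x - w‖ := by
      calc ‖w‖ = ‖x - (x - w)‖ := by congr 1; abel
        _ ≤ _ := norm_sub_le _ _
    nlinarith [norm_nonneg x, norm_nonneg (x - w)]
  calc ‖w‖ ^ k * ‖iteratedFDeriv ℝ n (fun w : Spc D => Real.exp (-a * ‖x - w‖ ^ 2)) w‖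
      ≤ (1 + ‖w‖) ^ k * (n.factorial * E * ((1 + C) * (1 + ‖w‖) ^ p) ^ n) := by
        refine mul_le_mul (by gcongr; linarith) h1 (norm_nonneg _) (by positivity)
    _ = n.factorial * (1 + C) ^ n * (1 + ‖w‖) ^ (p * n + k) * E := by
        rw [mul_pow, ← pow_mul, pow_add]; ring
    _ ≤ n.factorial * (1 + C) ^ n * ((1 + ‖x‖) * (1 + ‖x - w‖)) ^ (p * n + k) * E := by
        gcongr
    _ = n.factorial * (1 + C) ^ n * (1 + ‖x‖) ^ (p * n + k)
        * ((1 + ‖x - w‖) ^ (p * n + k) * E) := by rw [mul_pow]; ring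
    _ ≤ _ := by
        exact mul_le_mul_of_nonneg_left (poly_gauss ha _ (norm_nonneg (x - w))) (by positivity)

/-! ### Derivatives of real Gaussians -/

/-- The Gaussian `exp (-a|y|²)`. -/
def gk (a : ℝ) (y : Spc D) : ℝ := Real.exp (-a * ‖y‖ ^ 2)

/-- Kronecker delta. -/
def dl (j k : Fin D) : ℝ := if j = k then 1 else 0

/-- First derivatives of the Gaussian. -/
def k1 (a : ℝ) (k : Fin D) (y : Spc D) : ℝ := -2 * a * y k * gk a y

/-- Second derivatives of the Gaussian. -/
def k2 (a : ℝ) (l k : Fin D) (y : Spc D) : ℝ := (-2 * a * dl l k + 4 * a ^ 2 * y l * y k) * gk a y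

/-- Third derivatives of the Gaussian. -/
def k3 (a : ℝ) (j l k : Fin D) (y : Spc D) : ℝ :=
  (4 * a ^ 2 * (dl l k * y j + dl j l * y k + dl j k * y l) - 8 * a ^ 3 * y j * y l * y k) * gk a y

lemma hasFDerivAt_gk (a : ℝ) (y : Spc D) :
    HasFDerivAt (gk a) (Real.exp (-a * ‖y‖ ^ 2) • (-a • (2 • innerSL ℝ y))) y := by
  exact ((hasStrictFDerivAt_norm_sq y).hasFDerivAt.const_mul (-a)).exp

lemma hasFDerivAt_coord (k : Fin D) (y : Spc D) :
    HasFDerivAt (fun y : Spc D => y k) (EuclideanSpace.proj k : Spc D →L[ℝ] ℝ) y :=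
  (EuclideanSpace.proj k : Spc D →L[ℝ] ℝ).hasFDerivAt

lemma proj_single (j k : Fin D) :
    (EuclideanSpace.proj k : Spc D →L[ℝ] ℝ) (EuclideanSpace.single j 1) = dl j k := by
  simp [dl, eq_comm]

lemma dl_comm (j k : Fin D) : dl j k = dl k j := by simp [dl, eq_comm]

lemma pd_gk (a : ℝ) (j : Fin D) (y : Spc D) : pd j (gk a) y = k1 a j y := by
  rw [pd, (hasFDerivAt_gk a y).fderiv, k1, gk]
  simp [EuclideanSpace.inner_single_right]
  ring

lemma hasFDerivAt_k1 (a : ℝ) (k : Fin D) (y : Spc D) :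
    HasFDerivAt (k1 a k) ((-2 * a * y k) • fderiv ℝ (gk a) y
      + gk a y • ((-2 * a) • (EuclideanSpace.proj k : Spc D →L[ℝ] ℝ))) y :=
  ((hasFDerivAt_coord k y).const_mul (-2 * a)).mul
    (hasFDerivAt_gk a y).differentiableAt.hasFDerivAt

lemma pd_k1 (a : ℝ) (l k : Fin D) (y : Spc D) : pd l (k1 a k) y = k2 a l k y := by
  have h := pd_gk a l y
  rw [pd] at h
  rw [pd, (hasFDerivAt_k1 a k y).fderiv]
  simp only [add_apply, smul_apply, smul_eq_mul,
    proj_single, h, k1, k2]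
  ring

lemma hasFDerivAt_k2 (a : ℝ) (l k : Fin D) (y : Spc D) :
    HasFDerivAt (k2 a l k) ((-2 * a * dl l k + 4 * a ^ 2 * y l * y k) • fderiv ℝ (gk a) y
      + gk a y • ((4 * a ^ 2 * y l) • (EuclideanSpace.proj k : Spc D →L[ℝ] ℝ)
        + y k • ((4 * a ^ 2) • (EuclideanSpace.proj l : Spc D →L[ℝ] ℝ)))) y :=
  ((((hasFDerivAt_coord l y).const_mul (4 * a ^ 2)).mul (hasFDerivAt_coord k y)).const_add
    (-2 * a * dl l k)).mul (hasFDerivAt_gk a y).differentiableAt.hasFDerivAt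

lemma pd_k2 (a : ℝ) (j l k : Fin D) (y : Spc D) : pd j (k2 a l k) y = k3 a j l k y := by
  have h := pd_gk a j y
  rw [pd] at h
  rw [pd, (hasFDerivAt_k2 a l k y).fderiv]
  simp only [add_apply, smul_apply, smul_eq_mul,
    proj_single, h, k1, k3]
  ring

lemma pd_reflect (j : Fin D) (f : Spc D → ℝ) (x w : Spc D) (hf : DifferentiableAt ℝ f (x - w)) :
    pd j (fun w => f (x - w)) w = - pd j f (x - w) := by
  have h1 : HasFDerivAt (fun w : Spc D => x - w) (-ContinuousLinearMap.id ℝ (Spc D)) w :=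
    (hasFDerivAt_id w).const_sub x
  have h2 := hf.hasFDerivAt.comp w h1
  rw [pd, show (fun w => f (x - w)) = f ∘ (fun w => x - w) from rfl, h2.fderiv, pd]
  simp

lemma pd_const_mul (j : Fin D) (f : Spc D → ℝ) (c : ℝ) (w : Spc D) :
    pd j (fun w => c * f w) w = c * pd j f w := by
  rw [pd, pd, show (fun w => c * f w) = c • f from rfl, fderiv_const_smul_field]
  simp

lemma pd_pd_k1_reflect (c a : ℝ) (j l k : Fin D) (x w : Spc D) :
    pd j (fun y => pd l (fun w => c * k1 a k (x - w)) y) w = c * k3 a j l k (x - w) := by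
  have h1 : (fun y => pd l (fun w => c * k1 a k (x - w)) y) = fun y => (-c) * k2 a l k (x - y) := by
    funext y
    rw [pd_const_mul, pd_reflect _ _ _ _ (hasFDerivAt_k1 a k _).differentiableAt, pd_k1]
    ring
  rw [h1, pd_const_mul, pd_reflect _ _ _ _ (hasFDerivAt_k2 a l k _).differentiableAt, pd_k2]
  ring

/-- The Laplacian of the first derivatives of the Gaussian. -/
lemma sum_k3 (a : ℝ) (k : Fin D) (y : Spc D) :
    ∑ j, k3 a j j k y = 4 * a ^ 2 * y k * (D + 2 - 2 * a * ‖y‖ ^ 2) * gk a y := by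
  have h1 : ∀ j, k3 a j j k y = (4 * a ^ 2 * (2 * (dl j k * y j)) + 4 * a ^ 2 * y k
      - 8 * a ^ 3 * y k * (y j) ^ 2) * gk a y := by
    intro j
    simp only [k3]
    rw [show dl j j = 1 by simp [dl]]
    ring
  simp only [h1]
  have h2 : ∑ j, dl j k * y j = y k := by simp [dl]
  have h3 : ‖y‖ ^ 2 = ∑ j, y j ^ 2 := by
    rw [EuclideanSpace.norm_sq_eq]; simp
  calc _ = (4 * a ^ 2 * (2 * ∑ j, dl j k * y j) + ∑ _j : Fin D, 4 * a ^ 2 * y k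
        - 8 * a ^ 3 * y k * ∑ j, (y j) ^ 2) * gk a y := by
        simp only [Finset.mul_sum, ← Finset.sum_add_distrib, ← Finset.sum_sub_distrib,
          Finset.sum_mul]
    _ = _ := by
        rw [h2, ← h3]
        simp only [Finset.sum_const, Finset.card_univ, Fintype.card_fin, nsmul_eq_mul]
        ring

/-- The normalising factor of the heat kernel. -/
def hc (D : ℕ) (lam t : ℝ) : ℝ := (4 * π * lam * t) ^ (-(D : ℝ) / 2)

lemma heatK_eq (lam : ℝ) (y : Spc D) (t : ℝ) :
    heatK D lam y t = hc D lam t * gk (1 / (4 * lam * t)) y := by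
  rw [heatK, hc, gk]; congr 2; ring

lemma pd_heatK (lam t : ℝ) (k : Fin D) (y : Spc D) :
    pd k (fun y => heatK D lam y t) y = hc D lam t * k1 (1 / (4 * lam * t)) k y := by
  simp only [heatK_eq]
  rw [pd_const_mul, pd_gk]

lemma exists_schwartz_k1 (x : Spc D) (c : ℝ) {a : ℝ} (ha : 0 < a) (k : Fin D) :
    ∃ φ : SchwartzMap (Spc D) ℝ, ⇑φ = fun w => c * k1 a k (x - w) := by
  obtain ⟨φ, hφ⟩ := exists_schwartz_gauss x ha
  have htg : Function.HasTemperateGrowth (fun w : Spc D => c * (-2 * a * (x - w) k)) := by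
    have h1 : Function.HasTemperateGrowth (fun w : Spc D => x - w) :=
      (Function.HasTemperateGrowth.const x).sub Function.HasTemperateGrowth.id'
    have h2 : Function.HasTemperateGrowth (fun w : Spc D => (x - w) k) :=
      ((EuclideanSpace.proj k : Spc D →L[ℝ] ℝ).hasTemperateGrowth).comp h1
    exact (Function.HasTemperateGrowth.const c).mul
      ((Function.HasTemperateGrowth.const (-2 * a)).mul h2)
  refine ⟨SchwartzMap.smulLeftCLM ℝ (fun w : Spc D => c * (-2 * a * (x - w) k)) φ, ?_⟩
  rw [SchwartzMap.smulLeftCLM_apply htg]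
  funext w
  rw [hφ, smul_eq_mul, k1, gk]
  ring

/-! ### Parabolic scaling of the heat kernel and its derivatives -/

/-- The parabolic scaling factor `t^{-1/2}`. -/
def rho (t : ℝ) : ℝ := (√t)⁻¹

lemma rho_pos {t : ℝ} (ht : 0 < t) : 0 < rho t := inv_pos.2 (Real.sqrt_pos.2 ht)

lemma rho_sq {t : ℝ} (ht : 0 < t) : rho t ^ 2 = t⁻¹ := by
  rw [rho, inv_pow, Real.sq_sqrt ht.le]

lemma rho_anti {s t : ℝ} (hs : 0 < s) (hst : s ≤ t) : rho t ≤ rho s :=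
  inv_anti₀ (Real.sqrt_pos.2 hs) (Real.sqrt_le_sqrt hst)

lemma measurable_rho : Measurable rho := Real.continuous_sqrt.measurable.inv

lemma hc_scale {lam t : ℝ} (hl : 0 < lam) (ht : 0 < t) :
    hc D lam t = rho t ^ D * hc D lam 1 := by
  rw [hc, hc, mul_one, Real.mul_rpow (by positivity) ht.le, mul_comm]
  congr 1
  rw [rho, Real.sqrt_eq_rpow, ← Real.rpow_neg ht.le, ← Real.rpow_natCast, ← Real.rpow_mul ht.le]
  congr 1; ring

lemma gk_scale {a t : ℝ} (ht : 0 < t) (y : Spc D) : gk (a / t) y = gk a (rho t • y) := by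
  rw [gk, gk, norm_smul, Real.norm_eq_abs, mul_pow, sq_abs, rho_sq ht]
  congr 1; field_simp

lemma k1_scale {a t : ℝ} (ht : 0 < t) (k : Fin D) (y : Spc D) :
    k1 (a / t) k y = rho t * k1 a k (rho t • y) := by
  rw [k1, k1, gk_scale ht, div_eq_mul_inv, ← rho_sq ht]
  simp only [PiLp.smul_apply, smul_eq_mul]
  ring

lemma k3_scale {a t : ℝ} (ht : 0 < t) (j l k : Fin D) (y : Spc D) :
    k3 (a / t) j l k y = rho t ^ 3 * k3 a j l k (rho t • y) := by
  rw [k3, k3, gk_scale ht, div_eq_mul_inv, ← rho_sq ht]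
  simp only [PiLp.smul_apply, smul_eq_mul]
  ring

lemma arg_div {lam t : ℝ} : 1 / (4 * lam * t) = (1 / (4 * lam)) / t := by
  rw [div_div]

/-- Holomorphic extension of the heat kernel at time one. -/
def K0c (lam : ℝ) (z : CSpc D) : ℂ := (hc D lam 1 : ℂ) * cgauss (1 / (4 * lam)) z

/-- Holomorphic extension of the first derivatives of the heat kernel at time one. -/
def K1c (lam : ℝ) (j : Fin D) (z : CSpc D) : ℂ :=
  ((-2 * (1 / (4 * lam)) : ℝ) : ℂ) * (z j * K0c lam z)

/-- Holomorphic extension of the third derivatives of the heat kernel at time one. -/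
def K3c (lam : ℝ) (j l k : Fin D) (z : CSpc D) : ℂ :=
  ((4 * (1 / (4 * lam)) ^ 2 * dl l k : ℝ) : ℂ) * (z j * K0c lam z)
  + (((4 * (1 / (4 * lam)) ^ 2 * dl j l : ℝ) : ℂ) * (z k * K0c lam z)
  + (((4 * (1 / (4 * lam)) ^ 2 * dl j k : ℝ) : ℂ) * (z l * K0c lam z)
  + ((-8 * (1 / (4 * lam)) ^ 3 : ℝ) : ℂ) * (z j * (z l * (z k * K0c lam z)))))

lemma goodK0 {lam : ℝ} (hl : 0 < lam) : GoodK (K0c lam : CSpc D → ℂ) :=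
  (goodK_cgauss (by positivity)).const_mul _

lemma goodK1 {lam : ℝ} (hl : 0 < lam) (j : Fin D) : GoodK (K1c lam j) :=
  ((goodK0 hl).coord_mul j).const_mul _

lemma goodK3 {lam : ℝ} (hl : 0 < lam) (j l k : Fin D) : GoodK (K3c lam j l k) :=
  (((goodK0 hl).coord_mul j).const_mul _).add ((((goodK0 hl).coord_mul k).const_mul _).add
    ((((goodK0 hl).coord_mul l).const_mul _).add
      (((((goodK0 hl).coord_mul k).coord_mul l).coord_mul j).const_mul _)))

lemma K0c_toC (lam : ℝ) (y : Spc D) :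
    K0c lam (toC y) = ((hc D lam 1 * gk (1 / (4 * lam)) y : ℝ) : ℂ) := by
  rw [K0c, cgauss_toC, gk]; push_cast; rfl

lemma K1c_toC (lam : ℝ) (j : Fin D) (y : Spc D) :
    K1c lam j (toC y) = ((hc D lam 1 * k1 (1 / (4 * lam)) j y : ℝ) : ℂ) := by
  rw [K1c, K0c_toC, k1, toC_apply]; push_cast; ring

lemma K3c_toC (lam : ℝ) (j l k : Fin D) (y : Spc D) :
    K3c lam j l k (toC y) = ((hc D lam 1 * k3 (1 / (4 * lam)) j l k y : ℝ) : ℂ) := by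
  rw [K3c, K0c_toC, k3, toC_apply, toC_apply, toC_apply]; push_cast; ring

lemma smul_sub_toC (ρ : ℝ) (x w : Spc D) : (ρ : ℂ) • (toC x - toC w) = toC (ρ • (x - w)) := by
  ext j; simp

lemma SS_K0 {lam t : ℝ} (hl : 0 < lam) (ht : 0 < t) (g : Spc D → ℝ) (x : Spc D) :
    SS (K0c lam) (rho t) (fun w => (g w : ℂ)) (toC x)
      = ((∫ w, heatK D lam (x - w) t * g w : ℝ) : ℂ) := by
  rw [SS, ← integral_complex_ofReal, ← integral_const_mul]
  congr 1; funext w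
  rw [smul_sub_toC, K0c_toC, heatK_eq, arg_div, gk_scale ht, hc_scale hl ht]
  push_cast; ring

lemma SS_K1 {lam t : ℝ} (hl : 0 < lam) (ht : 0 < t) (j : Fin D) (g : Spc D → ℝ) (x : Spc D) :
    (rho t : ℂ) * SS (K1c lam j) (rho t) (fun w => (g w : ℂ)) (toC x)
      = ((∫ w, pd j (fun y => heatK D lam y t) (x - w) * g w : ℝ) : ℂ) := by
  rw [SS, ← integral_complex_ofReal, ← integral_const_mul, ← integral_const_mul]
  congr 1; funext w
  rw [smul_sub_toC, K1c_toC, pd_heatK, arg_div, k1_scale ht, hc_scale hl ht]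
  push_cast; ring

lemma SS_K3 {lam t : ℝ} (hl : 0 < lam) (ht : 0 < t) (j l k : Fin D) (g : Spc D → ℝ) (x : Spc D) :
    (rho t : ℂ) ^ 3 * SS (K3c lam j l k) (rho t) (fun w => (g w : ℂ)) (toC x)
      = ((∫ w, g w * (hc D lam t * k3 (1 / (4 * lam * t)) j l k (x - w)) : ℝ) : ℂ) := by
  rw [SS, ← integral_complex_ofReal, ← integral_const_mul, ← integral_const_mul]
  congr 1; funext w
  rw [smul_sub_toC, K3c_toC, arg_div, k3_scale ht, hc_scale hl ht]
  push_cast; ring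

/-! ### The pairing of the pressure with the heat kernel -/

lemma gk_reflect_integrable {c : ℝ} (hc : 0 < c) (x : Spc D) :
    Integrable fun w : Spc D => Real.exp (-c * ‖x - w‖ ^ 2) :=
  (integrable_gauss (D := D) hc).comp_sub_left x

lemma bmo_integrable {f : Spc D → ℝ} (hf : IsBMO f) {c : ℝ} (hc : 0 < c) (x : Spc D) :
    Integrable fun w => |f w| * Real.exp (-c * ‖x - w‖ ^ 2) := by
  obtain ⟨Cb, _, h⟩ := bmo_gauss hf hc x
  obtain ⟨m, hm, _⟩ := h 1 one_pos
  simp only [div_one] at hm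
  refine Integrable.mono' (hm.add ((gk_reflect_integrable hc x).const_mul |m|)) ?_
    (Eventually.of_forall fun w => ?_)
  · exact hf.1.aestronglyMeasurable.norm.mul (gk_reflect_integrable hc x).1
  · rw [Real.norm_eq_abs, abs_of_nonneg (by positivity)]
    simp only [Pi.add_apply]
    rw [← add_mul]
    gcongr
    calc |f w| = |(f w - m) + m| := by ring_nf
      _ ≤ _ := abs_add_le _ _

lemma k1_neg (a : ℝ) (k : Fin D) (y : Spc D) : k1 a k (-y) = - k1 a k y := by
  simp [k1, gk]

lemma integral_k1 (a : ℝ) (k : Fin D) (x : Spc D) : ∫ w, k1 a k (x - w) = 0 := by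
  rw [integral_sub_left_eq_self (fun w => k1 a k w) volume x]
  have h := integral_neg_eq_self (fun w : Spc D => k1 a k w) volume
  simp only [k1_neg, integral_neg] at h
  linarith

lemma continuous_gk (a : ℝ) : Continuous (gk a : Spc D → ℝ) := by
  unfold gk; fun_prop

lemma continuous_coord (k : Fin D) : Continuous fun y : Spc D => y k :=
  (EuclideanSpace.proj k : Spc D →L[ℝ] ℝ).continuous

lemma continuous_k1 (a : ℝ) (k : Fin D) : Continuous (k1 a k) :=
  (continuous_const.mul (continuous_coord k)).mul (continuous_gk a)

lemma abs_k1_le {a : ℝ} (ha : 0 < a) (k : Fin D) (y : Spc D) :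
    |k1 a k y| ≤ 2 * a * (Nat.factorial 1 * Real.exp (1 + 1 / (4 * (a / 2))))
      * Real.exp (-(a / 2) * ‖y‖ ^ 2) := by
  have h1 := poly_gauss (a := a / 2) (by positivity) 1 (norm_nonneg y)
  have h2 : gk a y = Real.exp (-(a / 2) * ‖y‖ ^ 2) * Real.exp (-(a / 2) * ‖y‖ ^ 2) := by
    rw [gk, ← Real.exp_add]; congr 1; ring
  rw [k1, h2, abs_mul, abs_mul, abs_mul, abs_mul, abs_neg, abs_of_pos two_pos, abs_of_pos ha,
    abs_of_pos (Real.exp_pos _)]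
  calc 2 * a * |y k| * (Real.exp (-(a / 2) * ‖y‖ ^ 2) * Real.exp (-(a / 2) * ‖y‖ ^ 2))
      ≤ 2 * a * (1 + ‖y‖) ^ 1 * (Real.exp (-(a / 2) * ‖y‖ ^ 2) * Real.exp (-(a / 2) * ‖y‖ ^ 2)) := by
        gcongr
        rw [pow_one]; linarith [abs_coord_le y k]
    _ = 2 * a * ((1 + ‖y‖) ^ 1 * Real.exp (-(a / 2) * ‖y‖ ^ 2)) * Real.exp (-(a / 2) * ‖y‖ ^ 2) := by
        ring
    _ ≤ _ := by
        refine mul_le_mul_of_nonneg_right ?_ (Real.exp_pos _).le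
        exact mul_le_mul_of_nonneg_left h1 (by positivity)

lemma integrable_k1_mul {f : Spc D → ℝ} (hf : IsBMO f) {a : ℝ} (ha : 0 < a) (k : Fin D)
    (x : Spc D) : Integrable fun w => k1 a k (x - w) * f w := by
  refine Integrable.mono' ((bmo_integrable hf (c := a / 2) (by positivity) x).const_mul
    (2 * a * (Nat.factorial 1 * Real.exp (1 + 1 / (4 * (a / 2)))))) ?_
    (Eventually.of_forall fun w => ?_)
  · exact ((continuous_k1 a k).comp (continuous_const.sub continuous_id)).aestronglyMeasurable.mul
      hf.1.aestronglyMeasurable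
  · rw [norm_mul, Real.norm_eq_abs, Real.norm_eq_abs]
    calc _ ≤ _ := mul_le_mul_of_nonneg_right (abs_k1_le ha k (x - w)) (abs_nonneg (f w))
      _ = _ := by ring

lemma integrable_k1 {a : ℝ} (ha : 0 < a) (k : Fin D) (x : Spc D) :
    Integrable fun w => k1 a k (x - w) := by
  refine Integrable.mono' ((gk_reflect_integrable (c := a / 2) (by positivity) x).const_mul
    (2 * a * (Nat.factorial 1 * Real.exp (1 + 1 / (4 * (a / 2)))))) ?_
    (Eventually.of_forall fun w => abs_k1_le ha k (x - w))
  exact ((continuous_k1 a k).comp (continuous_const.sub continuous_id)).aestronglyMeasurable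

/-- The pairing of `∂_k G_ν(x - ·, r)` with a function of bounded mean oscillation. -/
def hP (ν : ℝ) (k : Fin D) (x : Spc D) (f : Spc D → ℝ) (r : ℝ) : ℝ :=
  ∫ w, hc D ν r * k1 (1 / (4 * ν * r)) k (x - w) * f w

/-- Since `∂_k G` has mean zero, a constant may be subtracted from `f` at each scale, so that
`bmo_gauss` applies. -/
lemma hP_bound {ν : ℝ} (hν : 0 < ν) (k : Fin D) (x : Spc D) {f : Spc D → ℝ} (hf : IsBMO f) :
    ∃ C : ℝ, ∀ r : ℝ, 0 < r → |hP ν k x f r| ≤ C * rho r := by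
  set a := 1 / (4 * ν) with ha'
  have ha : 0 < a := by positivity
  obtain ⟨Cb, hCb, hb⟩ := bmo_gauss hf (c := a / 2) (by positivity) x
  set C1 := 2 * a * (Nat.factorial 1 * Real.exp (1 + 1 / (4 * (a / 2)))) with hC1
  have hc0 : 0 ≤ hc D ν 1 := by unfold hc; positivity
  refine ⟨hc D ν 1 * C1 * Cb, fun r hr => ?_⟩
  obtain ⟨m, hm, hmb⟩ := hb (√r) (Real.sqrt_pos.2 hr)
  have hρ := rho_pos hr
  have har : 0 < 1 / (4 * ν * r) := by positivity
  have h1 : hP ν k x f r = hc D ν r * ∫ w, k1 (1 / (4 * ν * r)) k (x - w) * (f w - m) := by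
    have h2 : ∫ w, k1 (1 / (4 * ν * r)) k (x - w) * (f w - m)
        = (∫ w, k1 (1 / (4 * ν * r)) k (x - w) * f w)
          - ∫ w, k1 (1 / (4 * ν * r)) k (x - w) * m := by
      rw [← integral_sub (integrable_k1_mul hf har k x) ((integrable_k1 har k x).mul_const m)]
      congr 1; funext w; ring
    rw [h2, integral_mul_const, integral_k1, zero_mul, sub_zero, hP, ← integral_const_mul]
    congr 1; funext w; ring
  have h3 : |∫ w, k1 (1 / (4 * ν * r)) k (x - w) * (f w - m)|
      ≤ ∫ w, rho r * C1 * (|f w - m| * Real.exp (-(a / 2) * (‖x - w‖ / √r) ^ 2)) := by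
    rw [← Real.norm_eq_abs]
    refine norm_integral_le_of_norm_le (hm.const_mul _) (Eventually.of_forall fun w => ?_)
    rw [norm_mul, Real.norm_eq_abs, Real.norm_eq_abs, arg_div, k1_scale hr, abs_mul,
      abs_of_pos hρ]
    have h4 := abs_k1_le ha k (rho r • (x - w))
    have h5 : ‖rho r • (x - w)‖ = ‖x - w‖ / √r := by
      rw [norm_smul, Real.norm_eq_abs, abs_of_pos hρ, rho]; ring
    rw [h5] at h4
    calc _ ≤ rho r * (C1 * Real.exp (-(a / 2) * (‖x - w‖ / √r) ^ 2)) * |f w - m| := by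
          gcongr
      _ = _ := by ring
  have h6 : rho r ^ D * √r ^ D = 1 := by
    rw [← mul_pow, rho, inv_mul_cancel₀ (Real.sqrt_pos.2 hr).ne', one_pow]
  rw [h1, abs_mul, hc_scale hν hr, abs_of_nonneg (by positivity)]
  calc rho r ^ D * hc D ν 1 * |∫ w, k1 (1 / (4 * ν * r)) k (x - w) * (f w - m)|
      ≤ rho r ^ D * hc D ν 1 * (rho r * C1 * (Cb * √r ^ D)) := by
        refine mul_le_mul_of_nonneg_left (h3.trans ?_) (by positivity)
        rw [integral_const_mul]
        exact mul_le_mul_of_nonneg_left hmb (by positivity)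
    _ = hc D ν 1 * C1 * Cb * rho r * (rho r ^ D * √r ^ D) := by ring
    _ = _ := by rw [h6, mul_one]

lemma tendsto_rho : Tendsto rho atTop (𝓝 0) := by
  have : Tendsto (fun r : ℝ => √r) atTop atTop := Real.tendsto_sqrt_atTop
  exact this.inv_tendsto_atTop

lemma hP_tendsto {ν : ℝ} (hν : 0 < ν) (k : Fin D) (x : Spc D) {f : Spc D → ℝ} (hf : IsBMO f) :
    Tendsto (hP ν k x f) atTop (𝓝 0) := by
  obtain ⟨C, hC⟩ := hP_bound hν k x hf
  have h : Tendsto (fun r => C * rho r) atTop (𝓝 0) := by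
    simpa using tendsto_rho.const_mul C
  refine squeeze_zero_norm' ?_ h
  filter_upwards [eventually_gt_atTop 0] with r hr using hC r hr

/-- The heat equation for `∂_k G_ν`. -/
lemma hasDerivAt_kernel {ν : ℝ} (hν : 0 < ν) (k : Fin D) (y : Spc D) {r : ℝ} (hr : 0 < r) :
    HasDerivAt (fun r => hc D ν r * k1 (1 / (4 * ν * r)) k y)
      (ν * (hc D ν r * (4 * (1 / (4 * ν * r)) ^ 2 * y k
        * (D + 2 - 2 * (1 / (4 * ν * r)) * ‖y‖ ^ 2) * gk (1 / (4 * ν * r)) y))) r := by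
  have hA : HasDerivAt (fun r : ℝ => 1 / (4 * ν * r)) (-(1 / (4 * ν * r)) / r) r := by
    have h := ((hasDerivAt_id r).const_mul (4 * ν)).fun_inv (show 4 * ν * r ≠ 0 by positivity)
    simp only [id] at h
    refine (h.congr_deriv ?_).congr_of_eventuallyEq (Eventually.of_forall fun r => ?_)
    · field_simp
    · simp [one_div]
  have hH : HasDerivAt (hc D ν) (-(D : ℝ) / (2 * r) * hc D ν r) r := by
    have h := ((hasDerivAt_id r).const_mul (4 * π * ν)).rpow_const (p := -(D : ℝ) / 2)
      (Or.inl (show 4 * π * ν * r ≠ 0 by positivity))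
    simp only [id] at h
    refine h.congr_deriv ?_
    rw [Real.rpow_sub_one (by positivity), hc]
    field_simp
  have hG : HasDerivAt (fun r : ℝ => gk (1 / (4 * ν * r)) y)
      (gk (1 / (4 * ν * r)) y * (1 / (4 * ν * r) / r * ‖y‖ ^ 2)) r := by
    have h := (hA.fun_neg.mul_const (‖y‖ ^ 2)).exp
    refine h.congr_deriv ?_
    rw [gk]; ring
  have h := hH.fun_mul (((hA.const_mul (-2)).mul_const (y k)).fun_mul hG)
  refine h.congr_deriv ?_
  simp only [k1]
  field_simp
  ring

/-! ### Elimination of the pressure -/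

lemma rho_cube {r : ℝ} (hr : 0 < r) : rho r ^ 3 = r ^ (-(3 / 2) : ℝ) := by
  rw [rho, Real.sqrt_eq_rpow, ← Real.rpow_neg hr.le, ← Real.rpow_natCast, ← Real.rpow_mul hr.le]
  norm_num

lemma integrableOn_rho_cube {τ : ℝ} (hτ : 0 < τ) : IntegrableOn (fun r => rho r ^ 3) (Ioi τ) := by
  refine (integrableOn_Ioi_rpow_of_lt (a := -(3 / 2)) (by norm_num) hτ).congr_fun ?_
    measurableSet_Ioi
  intro r hr
  exact (rho_cube (hτ.trans hr)).symm

lemma integral_rho_cube {τ : ℝ} (hτ : 0 < τ) : ∫ r in Ioi τ, rho r ^ 3 = 2 * rho τ := by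
  have h := integral_Ioi_rpow_of_lt (a := -(3 / 2)) (by norm_num) hτ
  rw [setIntegral_congr_fun measurableSet_Ioi (g := fun r : ℝ => r ^ (-(3 / 2) : ℝ))
    fun r hr => rho_cube (hτ.trans hr), h, rho, Real.sqrt_eq_rpow, ← Real.rpow_neg hτ.le]
  norm_num
  ring

/-- The time derivative of `∂_k G_ν`, from the heat equation. -/
def dk (ν : ℝ) (k : Fin D) (r : ℝ) (y : Spc D) : ℝ :=
  ν * (hc D ν r * (4 * (1 / (4 * ν * r)) ^ 2 * y k
        * (D + 2 - 2 * (1 / (4 * ν * r)) * ‖y‖ ^ 2) * gk (1 / (4 * ν * r)) y))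

lemma continuous_dk (ν : ℝ) (k : Fin D) (r : ℝ) : Continuous (dk ν k r) := by
  have h1 := continuous_gk (D := D) (1 / (4 * ν * r))
  have h2 := continuous_coord k
  unfold dk
  fun_prop

/-- A Gaussian bound for the time derivative, uniform for `r` near `r₀`, which justifies
differentiating under the integral sign. -/
lemma dk_bound {ν : ℝ} (hν : 0 < ν) (k : Fin D) {r₀ : ℝ} (hr₀ : 0 < r₀) :
    ∃ C c : ℝ, 0 ≤ C ∧ 0 < c ∧ ∀ r ∈ Ioo (r₀ / 2) (2 * r₀), ∀ y : Spc D,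
      |dk ν k r y| ≤ C * Real.exp (-c * ‖y‖ ^ 2) := by
  set amin := 1 / (8 * ν * r₀) with hamin
  set amax := 1 / (2 * ν * r₀) with hamax
  have h1 : 0 < amin := by positivity
  have h2 : 0 < amax := by positivity
  have hC : 0 ≤ hc D ν (r₀ / 2) := by unfold hc; positivity
  refine ⟨ν * (hc D ν (r₀ / 2) * (4 * amax ^ 2 * (D + 2 + 2 * amax)
    * ((Nat.factorial 3) * Real.exp (1 + 1 / (4 * (amin / 2)))))), amin / 2, by positivity,
    by positivity, fun r hr y => ?_⟩
  have hr0 : 0 < r := lt_trans (by positivity) hr.1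
  set a := 1 / (4 * ν * r) with ha
  have ha0 : 0 < a := by positivity
  have ha1 : amin ≤ a := by
    rw [hamin, ha]
    apply one_div_le_one_div_of_le (by positivity)
    nlinarith [hr.2]
  have ha2 : a ≤ amax := by
    rw [hamax, ha]
    apply one_div_le_one_div_of_le (by positivity)
    nlinarith [hr.1]
  have hh : hc D ν r ≤ hc D ν (r₀ / 2) := by
    unfold hc
    apply Real.rpow_le_rpow_of_nonpos (by positivity)
    · exact mul_le_mul_of_nonneg_left hr.1.le (by positivity)
    · have : (0 : ℝ) ≤ D := by positivity
      linarith
  have hh0 : 0 ≤ hc D ν r := by unfold hc; positivity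
  set u := ‖y‖ with hu
  have hu0 : 0 ≤ u := norm_nonneg y
  have hg : gk a y ≤ Real.exp (-(amin / 2) * u ^ 2) * Real.exp (-(amin / 2) * u ^ 2) := by
    rw [gk, ← Real.exp_add]
    apply Real.exp_le_exp.2
    nlinarith [mul_le_mul_of_nonneg_right ha1 (sq_nonneg u)]
  have hp := poly_gauss (a := amin / 2) (by positivity) 3 hu0
  have hq : |y k * (D + 2 - 2 * a * u ^ 2)| ≤ (D + 2 + 2 * amax) * (1 + u) ^ 3 := by
    rw [abs_mul]
    have h3 : |(D : ℝ) + 2 - 2 * a * u ^ 2| ≤ (D + 2 + 2 * amax) * (1 + u) ^ 2 := by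
      have hD : (0 : ℝ) ≤ D := by positivity
      have h4 : u ^ 2 ≤ (1 + u) ^ 2 := by nlinarith
      have h5 : 1 ≤ (1 + u) ^ 2 := by nlinarith
      have h6 : 2 * a * u ^ 2 ≤ 2 * amax * (1 + u) ^ 2 := by gcongr
      have h7 : (D + 2 : ℝ) ≤ (D + 2) * (1 + u) ^ 2 := le_mul_of_one_le_right (by positivity) h5
      have h8 : 0 ≤ 2 * a * u ^ 2 := by positivity
      rw [abs_le]
      constructor <;> nlinarith
    calc |y k| * |(D : ℝ) + 2 - 2 * a * u ^ 2|
        ≤ (1 + u) * ((D + 2 + 2 * amax) * (1 + u) ^ 2) := by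
          gcongr
          linarith [abs_coord_le y k]
      _ = _ := by ring
  have hg0 : 0 < gk a y := Real.exp_pos _
  have hdk : |dk ν k r y| = ν * (hc D ν r * (4 * a ^ 2 * |y k * (D + 2 - 2 * a * u ^ 2)| * gk a y)) := by
    rw [show dk ν k r y = ν * (hc D ν r * (4 * a ^ 2 * (y k * (D + 2 - 2 * a * u ^ 2)) * gk a y)) by
      simp only [dk]; ring]
    rw [abs_mul, abs_of_pos hν, abs_mul, abs_of_nonneg hh0, abs_mul, abs_of_pos hg0, abs_mul,
      abs_of_pos (by positivity : 0 < 4 * a ^ 2)]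
  rw [hdk]
  calc ν * (hc D ν r * (4 * a ^ 2 * |y k * (D + 2 - 2 * a * u ^ 2)| * gk a y))
      ≤ ν * (hc D ν (r₀ / 2) * (4 * amax ^ 2 * ((D + 2 + 2 * amax) * (1 + u) ^ 3)
        * (Real.exp (-(amin / 2) * u ^ 2) * Real.exp (-(amin / 2) * u ^ 2)))) := by gcongr
    _ = ν * (hc D ν (r₀ / 2) * (4 * amax ^ 2 * (D + 2 + 2 * amax)
        * ((1 + u) ^ 3 * Real.exp (-(amin / 2) * u ^ 2)))) * Real.exp (-(amin / 2) * u ^ 2) := by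
        ring
    _ ≤ _ := by gcongr

lemma hP_hasDerivAt {ν : ℝ} (hν : 0 < ν) (k : Fin D) (x : Spc D) {f : Spc D → ℝ} (hf : IsBMO f)
    {r₀ : ℝ} (hr₀ : 0 < r₀) :
    HasDerivAt (hP ν k x f) (∫ w, dk ν k r₀ (x - w) * f w) r₀ := by
  obtain ⟨C, c, hC, hc', hb⟩ := dk_bound hν k hr₀
  have hmem : Ioo (r₀ / 2) (2 * r₀) ∈ 𝓝 r₀ := Ioo_mem_nhds (by linarith) (by linarith)
  have hsub : Continuous fun w : Spc D => x - w := continuous_const.sub continuous_id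
  refine (hasDerivAt_integral_of_dominated_loc_of_deriv_le
    (bound := fun w => C * (|f w| * Real.exp (-c * ‖x - w‖ ^ 2)))
    (F := fun r w => hc D ν r * k1 (1 / (4 * ν * r)) k (x - w) * f w)
    (F' := fun r w => dk ν k r (x - w) * f w) hmem (Eventually.of_forall fun r => ?_) ?_ ?_
    (Eventually.of_forall fun w r hr => ?_) ((bmo_integrable hf hc' x).const_mul C)
    (Eventually.of_forall fun w r hr => ?_)).2
  · exact (((continuous_k1 _ k).comp hsub).aestronglyMeasurable.const_mul _).mul
      hf.1.aestronglyMeasurable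
  · have := (integrable_k1_mul hf (a := 1 / (4 * ν * r₀)) (by positivity) k x).const_mul (hc D ν r₀)
    refine this.congr (Eventually.of_forall fun w => ?_)
    simp only; ring
  · exact ((continuous_dk ν k r₀).comp hsub).aestronglyMeasurable.mul hf.1.aestronglyMeasurable
  · rw [norm_mul, Real.norm_eq_abs, Real.norm_eq_abs]
    calc _ ≤ _ := mul_le_mul_of_nonneg_right (hb r hr (x - w)) (abs_nonneg (f w))
      _ = _ := by ring
  · exact (hasDerivAt_kernel hν k (x - w) (lt_trans (by positivity) hr.1)).mul_const (f w)

/-- Testing the Poisson equation against `∂_k G_ν(x - ·, r)`. -/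
lemma poisson_test {ν : ℝ} (hν : 0 < ν) (k : Fin D) (x : Spc D) {p : Spc D → ℝ}
    {g : Fin D → Fin D → Spc D → ℝ} (hS : SolvesPoisson D p g) {r : ℝ} (hr : 0 < r) :
    ∫ w, dk ν k r (x - w) * p w
      = -(ν * ∑ j, ∑ l, ∫ w, g j l w * (hc D ν r * k3 (1 / (4 * ν * r)) j l k (x - w))) := by
  obtain ⟨φ, hφ⟩ := exists_schwartz_k1 x (hc D ν r) (a := 1 / (4 * ν * r)) (by positivity) k
  have h := hS φ
  rw [hφ] at h
  simp only [lap, pd_pd_k1_reflect] at h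
  rw [← mul_neg, ← h, ← integral_const_mul]
  congr 1; funext w
  rw [← Finset.mul_sum, sum_k3, dk]
  ring

/-- The pressure term of the Duhamel formula, expressed through the right-hand side of the
Poisson equation: `∂_k G(τ) * p = ν ∫_τ^∞ ∂_j ∂_l ∂_k G(r) * g_{jl} dr`. -/
lemma pressure_identity {ν : ℝ} (hν : 0 < ν) (k : Fin D) (x : Spc D) {p : Spc D → ℝ}
    (hp : IsBMO p) {g : Fin D → Fin D → Spc D → ℝ} (hS : SolvesPoisson D p g) {M : ℝ}
    (hM : ∀ j l w, |g j l w| ≤ M) {τ : ℝ} (hτ : 0 < τ) :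
    ((∫ w, pd k (fun y => heatK D ν y τ) (x - w) * p w : ℝ) : ℂ)
      = ν * ∫ r in Ioi τ, ∑ j, ∑ l, (rho r : ℂ) ^ 3
          * SS (K3c ν j l k) (rho r) (fun w => (g j l w : ℂ)) (toC x) := by
  set I : ℝ → ℝ := fun r => ∑ j, ∑ l, ∫ w, g j l w * (hc D ν r * k3 (1 / (4 * ν * r)) j l k (x - w))
    with hI
  have hder : ∀ r, 0 < r → HasDerivAt (hP ν k x p) (-(ν * I r)) r := by
    intro r hr
    have := hP_hasDerivAt hν k x hp hr
    rwa [poisson_test hν k x hS hr] at this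
  have hIc : ∀ r, 0 < r → ((I r : ℝ) : ℂ) = ∑ j, ∑ l, (rho r : ℂ) ^ 3
          * SS (K3c ν j l k) (rho r) (fun w => (g j l w : ℂ)) (toC x) := by
    intro r hr
    simp only [hI, SS_K3 hν hr]
    push_cast
    rfl
  have hbd : ∃ C : ℝ, ∀ r, 0 < r → |I r| ≤ C * rho r ^ 3 := by
    choose N hN0 hN using fun j l => (goodK3 hν j l k).exists_L1
    refine ⟨∑ j, ∑ l, N j l * M, fun r hr => ?_⟩
    rw [← Real.norm_eq_abs, ← Complex.norm_real, hIc r hr, Finset.sum_mul]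
    refine (norm_sum_le _ _).trans (Finset.sum_le_sum fun j _ => ?_)
    rw [Finset.sum_mul]
    refine (norm_sum_le _ _).trans (Finset.sum_le_sum fun l _ => ?_)
    rw [norm_mul, norm_pow, Complex.norm_real, Real.norm_eq_abs, abs_of_pos (rho_pos hr), mul_comm]
    refine mul_le_mul_of_nonneg_right ?_ (pow_pos (rho_pos hr) 3).le
    refine SS_bound_real (goodK3 hν j l k) (hN j l) (rho_pos hr) (fun w => ?_) (by simp)
    rw [Complex.norm_real]
    exact hM j l w
  obtain ⟨C, hC⟩ := hbd
  have hintg : IntegrableOn (fun r => -(ν * I r)) (Ioi τ) := by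
    have h1 : IntegrableOn (fun r => ν * (C * rho r ^ 3)) (Ioi τ) :=
      ((integrableOn_rho_cube hτ).const_mul C).const_mul ν
    refine Integrable.mono' h1 ?_ ?_
    · refine ((measurable_deriv (hP ν k x p)).aestronglyMeasurable).congr ?_
      filter_upwards [ae_restrict_mem measurableSet_Ioi] with r hr
      exact (hder r (hτ.trans hr)).deriv
    · filter_upwards [ae_restrict_mem measurableSet_Ioi] with r hr
      rw [norm_neg, norm_mul, Real.norm_eq_abs, abs_of_pos hν, Real.norm_eq_abs]
      exact mul_le_mul_of_nonneg_left (hC r (hτ.trans hr)) hν.le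
  have hftc := integral_Ioi_of_hasDerivAt_of_tendsto (a := τ)
    (hder τ hτ).continuousAt.continuousWithinAt (fun r hr => hder r (hτ.trans hr)) hintg
    (hP_tendsto hν k x hp)
  rw [integral_neg, integral_const_mul, zero_sub, neg_inj] at hftc
  have h1 : ∫ w, pd k (fun y => heatK D ν y τ) (x - w) * p w = hP ν k x p τ := by
    simp only [pd_heatK, hP]
  rw [h1, ← hftc]
  push_cast
  congr 1
  rw [← integral_complex_ofReal]
  exact setIntegral_congr_fun measurableSet_Ioi fun r hr => hIc r (hτ.trans hr)

/-! ### Holomorphic fields -/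

lemma rho_eq_rpow {t : ℝ} (ht : 0 ≤ t) : rho t = t ^ (-(1 / 2) : ℝ) := by
  rw [rho, Real.sqrt_eq_rpow, Real.rpow_neg ht]

lemma intervalIntegrable_rho_sub (t : ℝ) (ht : 0 ≤ t) :
    IntervalIntegrable (fun s => rho (t - s)) volume 0 t := by
  have h : IntervalIntegrable rho volume 0 t := by
    refine (intervalIntegral.intervalIntegrable_rpow' (r := (-(1 / 2) : ℝ)) (by norm_num)).congr ?_
    intro s hs
    rw [uIoc_of_le ht] at hs
    exact (rho_eq_rpow hs.1.le).symm
  have := h.comp_sub_left t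
  simpa using this.symm

lemma integrableOn_rho_sub (t : ℝ) (ht : 0 ≤ t) :
    IntegrableOn (fun s => rho (t - s)) (Ioo 0 t) :=
  ((intervalIntegrable_iff_integrableOn_Ioo_of_le ht).1 (intervalIntegrable_rho_sub t ht))

lemma integral_rho_sub (t : ℝ) (ht : 0 ≤ t) : ∫ s in Ioo 0 t, rho (t - s) = 2 * √t := by
  rw [← integral_Ioc_eq_integral_Ioo, ← intervalIntegral.integral_of_le ht,
    intervalIntegral.integral_comp_sub_left (fun s => rho s)]
  simp only [sub_self, sub_zero]
  have : ∫ s in (0:ℝ)..t, rho s = ∫ s in (0:ℝ)..t, s ^ (-(1 / 2) : ℝ) := by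
    refine intervalIntegral.integral_congr fun s hs => ?_
    rw [uIcc_of_le ht] at hs
    exact rho_eq_rpow hs.1
  rw [this, integral_rpow (Or.inl (by norm_num)), Real.sqrt_eq_rpow]
  norm_num
  ring

/-- A scalar field on `(0,T) × ℝ^D` (values at other times are ignored) that is jointly measurable
and whose slice at time `s` extends holomorphically to `{|im z| < √s}` with bound `M` there. -/
structure HolField (T M : ℝ) (g : ℝ → Spc D → ℂ) : Prop where
  meas : ∃ g' : ℝ → Spc D → ℂ, StronglyMeasurable (fun p : ℝ × Spc D => g' p.1 p.2) ∧
    ∀ s ∈ Ioo 0 T, g s = g' s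
  hol : ∀ s ∈ Ioo 0 T, ∃ G : CSpc D → ℂ, AnalyticOnNhd ℂ G (ostrip D √s) ∧
    (∀ w, G (toC w) = g s w) ∧ ∀ z ∈ ostrip D √s, ‖G z‖ ≤ M

namespace HolField
variable {T M M' : ℝ} {g g' : ℝ → Spc D → ℂ}

lemma congr (h : HolField T M g) (he : ∀ s ∈ Ioo 0 T, ∀ w, g' s w = g s w) :
    HolField T M g' := by
  have he' : ∀ s ∈ Ioo 0 T, g' s = g s := fun s hs => funext (he s hs)
  refine ⟨?_, fun s hs => ?_⟩
  · obtain ⟨f, hf, hfe⟩ := h.meas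
    exact ⟨f, hf, fun s hs => (he' s hs).trans (hfe s hs)⟩
  · rw [he' s hs]; exact h.hol s hs

lemma mono (h : HolField T M g) (hM : M ≤ M') : HolField T M' g :=
  ⟨h.meas, fun s hs => by
    obtain ⟨G, h1, h2, h3⟩ := h.hol s hs
    exact ⟨G, h1, h2, fun z hz => (h3 z hz).trans hM⟩⟩

lemma zero (hM : 0 ≤ M) : HolField T M (fun _ (_ : Spc D) => (0 : ℂ)) :=
  ⟨⟨fun _ _ => 0, stronglyMeasurable_const, fun _ _ => rfl⟩, fun _ _ =>
    ⟨fun _ => 0, fun _ _ => analyticAt_const, fun _ => rfl, fun _ _ => by simpa using hM⟩⟩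

lemma add (h : HolField T M g) (h' : HolField T M' g') :
    HolField T (M + M') (fun s w => g s w + g' s w) := by
  refine ⟨?_, fun s hs => ?_⟩
  · obtain ⟨f, hf, hfe⟩ := h.meas
    obtain ⟨f', hf', hfe'⟩ := h'.meas
    exact ⟨fun s w => f s w + f' s w, hf.add hf', fun s hs => by rw [hfe s hs, hfe' s hs]⟩
  · obtain ⟨G, h1, h2, h3⟩ := h.hol s hs
    obtain ⟨G', h1', h2', h3'⟩ := h'.hol s hs
    exact ⟨fun z => G z + G' z, fun z hz => (h1 z hz).fun_add (h1' z hz),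
      fun w => by simp only [h2, h2'],
      fun z hz => (norm_add_le _ _).trans (add_le_add (h3 z hz) (h3' z hz))⟩

lemma mul (h : HolField T M g) (h' : HolField T M' g') (hM : 0 ≤ M) :
    HolField T (M * M') (fun s w => g s w * g' s w) := by
  refine ⟨?_, fun s hs => ?_⟩
  · obtain ⟨f, hf, hfe⟩ := h.meas
    obtain ⟨f', hf', hfe'⟩ := h'.meas
    exact ⟨fun s w => f s w * f' s w, hf.mul hf', fun s hs => by rw [hfe s hs, hfe' s hs]⟩
  · obtain ⟨G, h1, h2, h3⟩ := h.hol s hs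
    obtain ⟨G', h1', h2', h3'⟩ := h'.hol s hs
    refine ⟨fun z => G z * G' z, fun z hz => (h1 z hz).fun_mul (h1' z hz),
      fun w => by simp only [h2, h2'], fun z hz => ?_⟩
    rw [norm_mul]
    exact mul_le_mul (h3 z hz) (h3' z hz) (norm_nonneg _) hM

lemma const_mul (h : HolField T M g) (c : ℂ) :
    HolField T (‖c‖ * M) (fun s w => c * g s w) := by
  refine ⟨?_, fun s hs => ?_⟩
  · obtain ⟨f, hf, hfe⟩ := h.meas
    exact ⟨fun s w => c * f s w, hf.const_mul c, fun s hs => by rw [hfe s hs]⟩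
  · obtain ⟨G, h1, h2, h3⟩ := h.hol s hs
    refine ⟨fun z => c * G z, fun z hz => analyticAt_const.fun_mul (h1 z hz),
      fun w => by simp only [h2], fun z hz => ?_⟩
    rw [norm_mul]
    exact mul_le_mul_of_nonneg_left (h3 z hz) (norm_nonneg _)

lemma sub (h : HolField T M g) (h' : HolField T M' g') :
    HolField T (M + M') (fun s w => g s w - g' s w) := by
  have := h.add (h'.const_mul (-1))
  simp only [norm_neg, norm_one, one_mul, neg_mul, ← sub_eq_add_neg] at this
  exact this

lemma sum {ι : Type*} (S : Finset ι) {f : ι → ℝ → Spc D → ℂ} (h : ∀ i, HolField T M (f i)) :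
    HolField T (S.card * M) (fun s w => ∑ i ∈ S, f i s w) := by
  classical
  induction S using Finset.induction_on with
  | empty => simpa using zero (D := D) (T := T) le_rfl
  | insert i S hi ih =>
    simp only [Finset.sum_insert hi, Finset.card_insert_of_notMem hi]
    refine ((h i).add ih).mono (le_of_eq ?_)
    push_cast; ring

lemma bound (h : HolField T M g) {s : ℝ} (hs : s ∈ Ioo 0 T) (w : Spc D) : ‖g s w‖ ≤ M := by
  obtain ⟨G, -, h2, h3⟩ := h.hol s hs
  rw [← h2]
  refine h3 _ ?_
  show ‖imPart (toC w)‖ < √s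
  rw [imPart_toC, norm_zero]
  exact Real.sqrt_pos.2 hs.1

lemma slice_meas (h : HolField T M g) {s : ℝ} (hs : s ∈ Ioo 0 T) : StronglyMeasurable (g s) := by
  obtain ⟨f, hf, hfe⟩ := h.meas
  rw [hfe s hs]
  exact hf.comp_measurable measurable_prodMk_left

lemma slice_analytic (h : HolField T M g) {s : ℝ} (hs : s ∈ Ioo 0 T) {K : CSpc D → ℂ}
    (hK : GoodK K) {r : ℝ} (hr : 0 < r) : AnalyticOnNhd ℂ (SS K (rho r) (g s)) univ :=
  SS_analytic hK (rho_pos hr) (h.slice_meas hs).aestronglyMeasurable (h.bound hs)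

/-- The slice bound behind both Duhamel terms. For `|im z| < √t` the contour is shifted to imaginary
part `(s/t) im z`: this lies in the strip of the slice at time `s`, and at distance at most
`√(t-s)` from `im z`. -/
lemma slice_bound (h : HolField T M g) {s t r : ℝ} (hs : 0 < s) (hst : s < t) (htT : t < T)
    (hr : t - s ≤ r) {K : CSpc D → ℂ} (hK : GoodK K) {N : ℝ}
    (hN : ∀ η : Spc D, ‖η‖ ≤ 1 → ∫ ξ : Spc D, ‖K (toC ξ + Complex.I • toC η)‖ ≤ N)
    {z : CSpc D} (hz : z ∈ ostrip D √t) :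
    ‖SS K (rho r) (g s) z‖ ≤ N * M := by
  obtain ⟨G, h1, h2, h3⟩ := h.hol s ⟨hs, hst.trans htT⟩
  have ht : 0 < t := hs.trans hst
  have hz' : ‖imPart z‖ < √t := hz
  have hg : g s = fun w => G (toC w) := funext fun w => (h2 w).symm
  rw [hg]
  have hts : 0 < t - s := sub_pos.2 hst
  have key : ∀ q : ℝ, 0 < q → q ≤ t → q / t * √t ≤ √q := by
    intro q hq hqt
    rw [div_mul_eq_mul_div, div_le_iff₀ ht]
    have h1 : √q * √q = q := Real.mul_self_sqrt hq.le
    have h2 : √t * √t = t := Real.mul_self_sqrt ht.le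
    have h3 : √q ≤ √t := Real.sqrt_le_sqrt hqt
    have h4 : 0 < √q := Real.sqrt_pos.2 hq
    have h5 : 0 < √t := Real.sqrt_pos.2 ht
    calc q * √t = √q * (√q * √t) := by rw [← mul_assoc, h1]
      _ ≤ √q * (√t * √t) := by gcongr
      _ = √q * t := by rw [h2]
  refine SS_bound hK hN (rho_pos (hts.trans_le hr)) h1 h3 (a := (s / t) • imPart z) ?_ ?_
  · rw [norm_smul, Real.norm_eq_abs, abs_of_pos (div_pos hs ht)]
    exact (mul_lt_mul_of_pos_left hz' (div_pos hs ht)).trans_le (key s hs hst.le)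
  · have e : imPart z - (s / t) • imPart z = ((t - s) / t) • imPart z := by
      rw [sub_div, div_self ht.ne', sub_smul, one_smul]
    rw [e, norm_smul, Real.norm_eq_abs, abs_of_pos (div_pos hts ht)]
    have h6 : (t - s) / t * ‖imPart z‖ ≤ √(t - s) :=
      (mul_le_mul_of_nonneg_left hz'.le (div_pos hts ht).le).trans
        (key _ hts (by linarith))
    calc rho r * ((t - s) / t * ‖imPart z‖) ≤ rho (t - s) * √(t - s) :=
          mul_le_mul (rho_anti hts hr) h6 (by positivity) (rho_pos hts).le
      _ = 1 := inv_mul_cancel₀ (Real.sqrt_pos.2 hts).ne'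

end HolField

lemma stronglyMeasurable_SS {α : Type*} [MeasurableSpace α] {K : CSpc D → ℂ} (hK : GoodK K)
    {ρ : α → ℝ} (hρ : Measurable ρ) {g : α → Spc D → ℂ}
    (hg : StronglyMeasurable (fun p : α × Spc D => g p.1 p.2)) {ζ : α → CSpc D}
    (hζ : Measurable ζ) : StronglyMeasurable (fun a => SS K (ρ a) (g a) (ζ a)) := by
  have h1 : Measurable (fun p : α × Spc D => ((ρ p.1 : ℝ) : ℂ) • (ζ p.1 - toC p.2)) := by
    have ha : Measurable (fun p : α × Spc D => ((ρ p.1 : ℝ) : ℂ)) :=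
      Complex.measurable_ofReal.comp (hρ.comp measurable_fst)
    exact ha.smul ((hζ.comp measurable_fst).sub (continuous_toC.measurable.comp measurable_snd))
  have h2 : StronglyMeasurable
      (fun p : α × Spc D => K (((ρ p.1 : ℝ) : ℂ) • (ζ p.1 - toC p.2)) * g p.1 p.2) :=
    (hK.cont.measurable.comp h1).stronglyMeasurable.mul hg
  have h3 : StronglyMeasurable (fun a => ((ρ a : ℝ) : ℂ) ^ D) :=
    ((Complex.measurable_ofReal.comp hρ).pow_const D).stronglyMeasurable
  exact h3.mul h2.integral_prod_right

/-- Integration in `s` of a family bounded by a multiple of `(t-s)^{-1/2}`. -/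
lemma duhamel_time {c t : ℝ} (hc : 0 ≤ c) (ht : 0 < t) {h : ℝ → CSpc D → ℂ}
    (hm : ∀ z ∈ ostrip D √t, AEStronglyMeasurable (fun s => h s z) (volume.restrict (Ioo 0 t)))
    (ha : ∀ s ∈ Ioo 0 t, AnalyticOnNhd ℂ (h s) (ostrip D √t))
    (hb : ∀ s ∈ Ioo 0 t, ∀ z ∈ ostrip D √t, ‖h s z‖ ≤ c * rho (t - s)) :
    (∀ z ∈ ostrip D √t, IntegrableOn (fun s => h s z) (Ioo 0 t)) ∧
    AnalyticOnNhd ℂ (fun z => ∫ s in Ioo 0 t, h s z) (ostrip D √t) ∧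
    ∀ z ∈ ostrip D √t, ‖∫ s in Ioo 0 t, h s z‖ ≤ c * (2 * √t) := by
  have hI := (integrableOn_rho_sub t ht.le).const_mul c
  refine ⟨fun z hz => ?_, ?_, fun z hz => ?_⟩
  · refine Integrable.mono' hI (hm z hz) ?_
    filter_upwards [ae_restrict_mem measurableSet_Ioo] with s hs using hb s hs z hz
  · refine analyticOnNhd_integral (isOpen_ostrip _) hm ?_ hI ?_
    · filter_upwards [ae_restrict_mem measurableSet_Ioo] with s hs using ha s hs
    · filter_upwards [ae_restrict_mem measurableSet_Ioo] with s hs using hb s hs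
  · rw [← integral_rho_sub t ht.le, ← integral_const_mul]
    refine norm_integral_le_of_norm_le hI ?_
    filter_upwards [ae_restrict_mem measurableSet_Ioo] with s hs using hb s hs z hz

/-! ### Heat and Duhamel operators on holomorphic fields -/

lemma stronglyMeasurable_setIntegral {β : Type*} [MeasurableSpace β] {S : Set (β × ℝ)}
    (hS : MeasurableSet S) {h : β × ℝ → ℂ} (hh : StronglyMeasurable h) :
    StronglyMeasurable (fun b => ∫ s in {s | (b, s) ∈ S}, h (b, s)) := by
  have h1 : StronglyMeasurable (fun b => ∫ s, S.indicator h (b, s)) :=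
    (hh.indicator hS).integral_prod_right'
  convert h1 using 2 with b
  have hb : MeasurableSet {s | (b, s) ∈ S} := measurable_prodMk_left hS
  rw [← integral_indicator hb]
  rfl

lemma ostrip_toC {R : ℝ} (hR : 0 < R) (x : Spc D) : toC x ∈ ostrip D R := by
  show ‖imPart (toC x)‖ < R
  rwa [imPart_toC, norm_zero]

lemma measurable_toC_snd : Measurable (fun p : ℝ × Spc D => (p.1, toC p.2)) :=
  measurable_fst.prodMk (continuous_toC.measurable.comp measurable_snd)

/-- A Duhamel integral whose integrand is holomorphic and `O((t-s)^{-1/2})` on the strip of width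
`√t` is again a holomorphic field. -/
lemma duhamel_field {T c : ℝ} (hc : 0 ≤ c) {h h' : ℝ → ℝ → CSpc D → ℂ}
    (hm : StronglyMeasurable (fun q : (ℝ × CSpc D) × ℝ => h' q.1.1 q.2 q.1.2))
    (he : ∀ s ∈ Ioo 0 T, ∀ t z, h t s z = h' t s z)
    (ha : ∀ s t, 0 < s → s < t → t < T → AnalyticOnNhd ℂ (h t s) (ostrip D √t))
    (hb : ∀ s t, 0 < s → s < t → t < T → ∀ z ∈ ostrip D √t, ‖h t s z‖ ≤ c * rho (t - s)) :
    HolField T (c * (2 * √T)) (fun t x => ∫ s in Ioo 0 t, h t s (toC x)) ∧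
    ∀ t ∈ Ioo 0 T, ∀ x, IntegrableOn (fun s => h t s (toC x)) (Ioo 0 t) := by
  have key : ∀ t ∈ Ioo 0 T, _ := fun t ht => duhamel_time (h := h t) (t := t) hc ht.1
    (fun z _ => by
      have h1 : StronglyMeasurable (fun s : ℝ => h' t s z) :=
        hm.comp_measurable (g := fun s : ℝ => ((t, z), s)) measurable_prodMk_left
      refine h1.aestronglyMeasurable.congr ?_
      filter_upwards [ae_restrict_mem measurableSet_Ioo] with s hs
      exact (he s ⟨hs.1, hs.2.trans ht.2⟩ t z).symm)
    (fun s hs => ha s t hs.1 hs.2 ht.2) (fun s hs => hb s t hs.1 hs.2 ht.2)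
  refine ⟨⟨⟨fun t x => ∫ s in Ioo 0 t, h' t s (toC x), ?_, fun t ht => ?_⟩, fun t ht => ?_⟩,
    fun t ht x => (key t ht).1 _ (ostrip_toC (Real.sqrt_pos.2 ht.1) x)⟩
  · have hS : MeasurableSet {q : (ℝ × CSpc D) × ℝ | 0 < q.2 ∧ q.2 < q.1.1} :=
      (measurableSet_lt measurable_const measurable_snd).inter
        (measurableSet_lt measurable_snd (measurable_fst.comp measurable_fst))
    exact (stronglyMeasurable_setIntegral hS hm).comp_measurable measurable_toC_snd
  · funext x
    exact setIntegral_congr_fun measurableSet_Ioo fun s hs =>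
      he s ⟨hs.1, hs.2.trans ht.2⟩ t (toC x)
  · refine ⟨_, (key t ht).2.1, fun w => rfl, fun z hz => ((key t ht).2.2 z hz).trans ?_⟩
    have := Real.sqrt_le_sqrt ht.2.le
    gcongr

/-- The heat evolution of a bounded scalar is a holomorphic field. -/
lemma heat_field {T N A : ℝ} {K : CSpc D → ℂ} (hK : GoodK K)
    (hN : ∀ η : Spc D, ‖η‖ ≤ 1 → ∫ ξ : Spc D, ‖K (toC ξ + Complex.I • toC η)‖ ≤ N)
    {f : Spc D → ℂ} (hf : AEStronglyMeasurable f) (hA : ∀ w, ‖f w‖ ≤ A) :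
    HolField T (N * A) (fun t x => SS K (rho t) f (toC x)) := by
  refine ⟨⟨fun t x => SS K (rho t) (hf.mk f) (toC x), ?_, fun s hs => ?_⟩, fun s hs =>
    ⟨SS K (rho s) f, fun z _ => SS_analytic hK (rho_pos hs.1) hf hA z (mem_univ z), fun _ => rfl,
      fun z hz => SS_bound_real hK hN (rho_pos hs.1) hA ?_⟩⟩
  · exact stronglyMeasurable_SS (α := ℝ × Spc D) hK (measurable_rho.comp measurable_fst)
      (g := fun _ => hf.mk f) (hf.stronglyMeasurable_mk.comp_measurable measurable_snd)
      (continuous_toC.measurable.comp measurable_snd)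
  · funext x
    simp only [SS]
    congr 1
    refine integral_congr_ae ?_
    filter_upwards [hf.ae_eq_mk] with w hw
    rw [hw]
  · have h1 : ‖imPart z‖ < √s := hz
    have h2 : 0 < √s := Real.sqrt_pos.2 hs.1
    rw [rho, inv_mul_le_iff₀ h2, mul_one]
    exact h1.le

/-- First-order Duhamel term. -/
lemma duhamel_one {T M N : ℝ} {g : ℝ → Spc D → ℂ} (hg : HolField T M g) (hM : 0 ≤ M)
    {K : CSpc D → ℂ} (hK : GoodK K) (hN0 : 0 ≤ N)
    (hN : ∀ η : Spc D, ‖η‖ ≤ 1 → ∫ ξ : Spc D, ‖K (toC ξ + Complex.I • toC η)‖ ≤ N) :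
    HolField T (N * M * (2 * √T)) (fun t x => ∫ s in Ioo 0 t,
      (rho (t - s) : ℂ) * SS K (rho (t - s)) (g s) (toC x)) ∧
    ∀ t ∈ Ioo 0 T, ∀ x, IntegrableOn (fun s =>
      (rho (t - s) : ℂ) * SS K (rho (t - s)) (g s) (toC x)) (Ioo 0 t) := by
  obtain ⟨g', hg', hge⟩ := hg.meas
  refine duhamel_field (h := fun t s z => (rho (t - s) : ℂ) * SS K (rho (t - s)) (g s) z)
    (h' := fun t s z => (rho (t - s) : ℂ) * SS K (rho (t - s)) (g' s) z) (by positivity)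
    ?_ (fun s hs t z => by simp only [hge s hs]) ?_ ?_
  · have h1 : Measurable (fun q : (ℝ × CSpc D) × ℝ => rho (q.1.1 - q.2)) :=
      measurable_rho.comp ((measurable_fst.comp measurable_fst).sub measurable_snd)
    refine (Complex.measurable_ofReal.comp h1).stronglyMeasurable.mul ?_
    refine stronglyMeasurable_SS (g := fun q : (ℝ × CSpc D) × ℝ => g' q.2) hK h1 ?_
      (measurable_snd.comp measurable_fst)
    exact hg'.comp_measurable
      (g := fun p : ((ℝ × CSpc D) × ℝ) × Spc D => (p.1.2, p.2))
      ((measurable_snd.comp measurable_fst).prodMk measurable_snd)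
  · intro s t hs hst htT z _
    exact analyticAt_const.fun_mul
      (hg.slice_analytic ⟨hs, hst.trans htT⟩ hK (sub_pos.2 hst) z (mem_univ z))
  · intro s t hs hst htT z hz
    rw [norm_mul, Complex.norm_real, Real.norm_eq_abs, abs_of_pos (rho_pos (sub_pos.2 hst)),
      mul_comm]
    exact mul_le_mul_of_nonneg_right (hg.slice_bound hs hst htT le_rfl hK hN hz)
      (rho_pos (sub_pos.2 hst)).le

/-- Third-order Duhamel term, coming from the pressure. -/
lemma duhamel_three {T M N : ℝ} {g : ℝ → Spc D → ℂ} (hg : HolField T M g) (hM : 0 ≤ M)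
    {K : CSpc D → ℂ} (hK : GoodK K) (hN0 : 0 ≤ N)
    (hN : ∀ η : Spc D, ‖η‖ ≤ 1 → ∫ ξ : Spc D, ‖K (toC ξ + Complex.I • toC η)‖ ≤ N) :
    HolField T (N * M * 2 * (2 * √T)) (fun t x => ∫ s in Ioo 0 t, ∫ r in Ioi (t - s),
      (rho r : ℂ) ^ 3 * SS K (rho r) (g s) (toC x)) ∧
    (∀ t ∈ Ioo 0 T, ∀ x, IntegrableOn (fun s => ∫ r in Ioi (t - s),
      (rho r : ℂ) ^ 3 * SS K (rho r) (g s) (toC x)) (Ioo 0 t)) ∧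
    ∀ t ∈ Ioo 0 T, ∀ x, ∀ s ∈ Ioo 0 t, IntegrableOn (fun r =>
      (rho r : ℂ) ^ 3 * SS K (rho r) (g s) (toC x)) (Ioi (t - s)) := by
  obtain ⟨g', hg', hge⟩ := hg.meas
  have hmeas : StronglyMeasurable (fun q : ((ℝ × CSpc D) × ℝ) × ℝ =>
      (rho q.2 : ℂ) ^ 3 * SS K (rho q.2) (g' q.1.2) q.1.1.2) := by
    have h1 : Measurable (fun q : ((ℝ × CSpc D) × ℝ) × ℝ => rho q.2) :=
      measurable_rho.comp measurable_snd
    refine ((Complex.measurable_ofReal.comp h1).pow_const 3).stronglyMeasurable.mul ?_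
    refine stronglyMeasurable_SS (g := fun q : ((ℝ × CSpc D) × ℝ) × ℝ => g' q.1.2) hK h1 ?_
      (measurable_snd.comp (measurable_fst.comp measurable_fst))
    exact hg'.comp_measurable
      (g := fun p : (((ℝ × CSpc D) × ℝ) × ℝ) × Spc D => (p.1.1.2, p.2))
      ((measurable_snd.comp (measurable_fst.comp measurable_fst)).prodMk measurable_snd)
  have hm : ∀ s t z, s ∈ Ioo 0 T → AEStronglyMeasurable (fun r =>
      (rho r : ℂ) ^ 3 * SS K (rho r) (g s) z) (volume.restrict (Ioi (t - s))) := by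
    intro s t z hs
    rw [hge s hs]
    exact (hmeas.comp_measurable (g := fun r : ℝ => (((t, z), s), r))
      measurable_prodMk_left).aestronglyMeasurable
  have hI : ∀ s t : ℝ, s < t → IntegrableOn (fun r => N * M * rho r ^ 3) (Ioi (t - s)) :=
    fun s t hst => (integrableOn_rho_cube (sub_pos.2 hst)).const_mul _
  have hb : ∀ s t, 0 < s → s < t → t < T → ∀ᵐ r ∂(volume.restrict (Ioi (t - s))),
      ∀ z ∈ ostrip D √t, ‖(rho r : ℂ) ^ 3 * SS K (rho r) (g s) z‖ ≤ N * M * rho r ^ 3 := by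
    intro s t hs hst htT
    filter_upwards [ae_restrict_mem measurableSet_Ioi] with r hr z hz
    have hr0 : 0 < rho r := rho_pos ((sub_pos.2 hst).trans hr)
    rw [norm_mul, norm_pow, Complex.norm_real, Real.norm_eq_abs, abs_of_pos hr0, mul_comm]
    exact mul_le_mul_of_nonneg_right
      (hg.slice_bound hs hst htT (le_of_lt hr) hK hN hz) (pow_pos hr0 3).le
  have hintg : ∀ s t, 0 < s → s < t → t < T → ∀ z ∈ ostrip D √t, IntegrableOn (fun r =>
      (rho r : ℂ) ^ 3 * SS K (rho r) (g s) z) (Ioi (t - s)) := by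
    intro s t hs hst htT z hz
    refine Integrable.mono' (hI s t hst) (hm s t z ⟨hs, hst.trans htT⟩) ?_
    filter_upwards [hb s t hs hst htT] with r hr using hr z hz
  have key := duhamel_field (T := T) (c := N * M * 2)
    (h := fun t s z => ∫ r in Ioi (t - s), (rho r : ℂ) ^ 3 * SS K (rho r) (g s) z)
    (h' := fun t s z => ∫ r in Ioi (t - s), (rho r : ℂ) ^ 3 * SS K (rho r) (g' s) z) (by positivity)
    ?_ (fun s hs t z => by simp only [hge s hs]) ?_ ?_
  · exact ⟨key.1, key.2, fun t ht x s hs =>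
      hintg s t hs.1 hs.2 ht.2 _ (ostrip_toC (Real.sqrt_pos.2 ht.1) x)⟩
  · have hS : MeasurableSet {q : ((ℝ × CSpc D) × ℝ) × ℝ | q.1.1.1 - q.1.2 < q.2} :=
      measurableSet_lt (((measurable_fst.comp measurable_fst).comp measurable_fst).sub
        (measurable_snd.comp measurable_fst)) measurable_snd
    exact stronglyMeasurable_setIntegral hS hmeas
  · intro s t hs hst htT
    refine analyticOnNhd_integral (isOpen_ostrip _) (fun z _ => hm s t z ⟨hs, hst.trans htT⟩) ?_
      (hI s t hst) (hb s t hs hst htT)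
    filter_upwards [ae_restrict_mem measurableSet_Ioi] with r hr z _
    exact analyticAt_const.fun_mul
      (hg.slice_analytic ⟨hs, hst.trans htT⟩ hK ((sub_pos.2 hst).trans hr) z (mem_univ z))
  · intro s t hs hst htT z hz
    have h1 : N * M * 2 * rho (t - s) = ∫ r in Ioi (t - s), N * M * rho r ^ 3 := by
      rw [integral_const_mul, integral_rho_cube (sub_pos.2 hst)]; ring
    rw [h1]
    refine norm_integral_le_of_norm_le (hI s t hst) ?_
    filter_upwards [hb s t hs hst htT] with r hr using hr z hz

/-! ### The approximation scheme -/

lemma integrable_pd_heatK_mul {lam t : ℝ} (hl : 0 < lam) (ht : 0 < t) (j : Fin D)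
    {g : Spc D → ℝ} (hg : AEStronglyMeasurable (fun w => (g w : ℂ))) {M : ℝ}
    (hM : ∀ w, ‖(g w : ℂ)‖ ≤ M) (x : Spc D) :
    Integrable fun w => pd j (fun y => heatK D lam y t) (x - w) * g w := by
  have h := (((goodK1 hl j).integrable_mul (rho_pos ht) hg hM (toC x)).const_mul
    ((rho t : ℂ) * (rho t : ℂ) ^ D)).re
  refine h.congr (Eventually.of_forall fun w => ?_)
  show RCLike.re _ = _
  have e : (rho t : ℂ) * (rho t : ℂ) ^ D * (K1c lam j ((rho t : ℂ) • (toC x - toC w)) * (g w : ℂ))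
      = ((pd j (fun y => heatK D lam y t) (x - w) * g w : ℝ) : ℂ) := by
    rw [smul_sub_toC, K1c_toC, pd_heatK, arg_div, k1_scale ht, hc_scale hl ht]
    push_cast; ring
  rw [e]
  exact Complex.ofReal_re _

/-- The bilinear Duhamel term of the scheme through the holomorphic kernels. -/
lemma duhamel_one_eq {lam T M : ℝ} (hl : 0 < lam) (hM : 0 ≤ M) {g : Fin D → ℝ → Spc D → ℝ}
    (hg : ∀ j, HolField T M (fun s w => (g j s w : ℂ))) {t : ℝ} (ht : t ∈ Ioo 0 T) (x : Spc D) :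
    ((∫ s in Ioo 0 t, ∫ w, ∑ j, pd j (fun y => heatK D lam y (t - s)) (x - w) * g j s w : ℝ) : ℂ)
      = ∑ j, ∫ s in Ioo 0 t, (rho (t - s) : ℂ)
          * SS (K1c lam j) (rho (t - s)) (fun w => (g j s w : ℂ)) (toC x) := by
  rw [← integral_complex_ofReal, ← integral_finsetSum]
  · refine setIntegral_congr_fun measurableSet_Ioo fun s hs => ?_
    have hs' : s ∈ Ioo 0 T := ⟨hs.1, hs.2.trans ht.2⟩
    have hts := sub_pos.2 hs.2
    rw [integral_finsetSum]
    · push_cast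
      exact Finset.sum_congr rfl fun j _ => (SS_K1 hl hts j (g j s) x).symm
    · exact fun j _ => integrable_pd_heatK_mul hl hts j
        ((hg j).slice_meas hs').aestronglyMeasurable ((hg j).bound hs') x
  · intro j _
    obtain ⟨N, hN0, hN⟩ := (goodK1 hl j).exists_L1
    exact (duhamel_one (hg j) hM (goodK1 hl j) hN0 hN).2 t ht x

/-- The pressure Duhamel term of the scheme through the holomorphic kernels. -/
lemma duhamel_three_eq {ν T M : ℝ} (hν : 0 < ν) (hM : 0 ≤ M) {g : Fin D → Fin D → ℝ → Spc D → ℝ}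
    (hg : ∀ j l, HolField T M (fun s w => (g j l s w : ℂ))) {P : ℝ → Spc D → ℝ}
    (hP : ∀ s ∈ Ioo 0 T, IsBMO (P s) ∧ SolvesPoisson D (P s) (fun j l => g j l s)) (k : Fin D)
    {t : ℝ} (ht : t ∈ Ioo 0 T) (x : Spc D) :
    ((∫ s in Ioo 0 t, ∫ w, pd k (fun y => heatK D ν y (t - s)) (x - w) * P s w : ℝ) : ℂ)
      = ν * ∑ j, ∑ l, ∫ s in Ioo 0 t, ∫ r in Ioi (t - s), (rho r : ℂ) ^ 3
          * SS (K3c ν j l k) (rho r) (fun w => (g j l s w : ℂ)) (toC x) := by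
  choose N hN0 hN using fun j l => (goodK3 hν j l k).exists_L1
  have hD := fun j l => (duhamel_three (hg j l) hM (goodK3 hν j l k) (hN0 j l) (hN j l)).2
  have h1 : ∀ s ∈ Ioo 0 t,
      ((∫ w, pd k (fun y => heatK D ν y (t - s)) (x - w) * P s w : ℝ) : ℂ)
      = ν * ∑ j, ∑ l, ∫ r in Ioi (t - s), (rho r : ℂ) ^ 3
          * SS (K3c ν j l k) (rho r) (fun w => (g j l s w : ℂ)) (toC x) := by
    intro s hs
    have hs' : s ∈ Ioo 0 T := ⟨hs.1, hs.2.trans ht.2⟩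
    have hintg : ∀ j l, IntegrableOn (fun r => (rho r : ℂ) ^ 3
          * SS (K3c ν j l k) (rho r) (fun w => (g j l s w : ℂ)) (toC x)) (Ioi (t - s)) :=
      fun j l => (hD j l).2 t ht x s hs
    rw [pressure_identity hν k x (hP s hs').1 (hP s hs').2 (M := M) _ (sub_pos.2 hs.2)]
    · congr 1
      rw [integral_finsetSum _ fun j _ => integrable_finsetSum _ fun l _ => hintg j l]
      exact Finset.sum_congr rfl fun j _ => integral_finsetSum _ fun l _ => hintg j l
    · intro j l w
      have := (hg j l).bound hs' w
      rwa [Complex.norm_real] at this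
  have hint2 : ∀ j l, IntegrableOn (fun s => ∫ r in Ioi (t - s), (rho r : ℂ) ^ 3
          * SS (K3c ν j l k) (rho r) (fun w => (g j l s w : ℂ)) (toC x)) (Ioo 0 t) :=
    fun j l => (hD j l).1 t ht x
  rw [← integral_complex_ofReal, setIntegral_congr_fun measurableSet_Ioo h1, integral_const_mul]
  congr 1
  rw [integral_finsetSum _ fun j _ => integrable_finsetSum _ fun l _ => hint2 j l]
  exact Finset.sum_congr rfl fun j _ => integral_finsetSum _ fun l _ => hint2 j l

lemma isBMO_zero : IsBMO (fun _ : Spc D => (0 : ℝ)) := by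
  refine ⟨(locallyIntegrable_const 0), ⟨0, ?_⟩⟩
  rintro v ⟨c, r, -, rfl⟩
  simp

lemma solvesPoisson_zero : SolvesPoisson D (fun _ => 0) (fun _ _ _ => 0) := by
  intro φ; simp

lemma exists_L1_family {ι : Type*} [Finite ι] {K : ι → CSpc D → ℂ} (hK : ∀ i, GoodK (K i)) :
    ∃ N : ℝ, 0 ≤ N ∧ ∀ i, ∀ η : Spc D, ‖η‖ ≤ 1 →
      ∫ ξ : Spc D, ‖K i (toC ξ + Complex.I • toC η)‖ ≤ N := by
  cases nonempty_fintype ι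
  choose N hN0 hN using fun i => (hK i).exists_L1
  exact ⟨∑ i, N i, Finset.sum_nonneg fun i _ => hN0 i, fun i η hη =>
    (hN i η hη).trans (Finset.single_le_sum (fun i _ => hN0 i) (Finset.mem_univ i))⟩

/-- `N` bounds the `L¹` norms, over all real slices at height at most one, of the kernels entering
the scheme. -/
structure KerBound (D : ℕ) (ν μ N : ℝ) : Prop where
  nonneg : 0 ≤ N
  u0 : ∀ η : Spc D, ‖η‖ ≤ 1 → ∫ ξ : Spc D, ‖K0c ν (toC ξ + Complex.I • toC η)‖ ≤ N
  b0 : ∀ η : Spc D, ‖η‖ ≤ 1 → ∫ ξ : Spc D, ‖K0c μ (toC ξ + Complex.I • toC η)‖ ≤ N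
  u1 : ∀ j, ∀ η : Spc D, ‖η‖ ≤ 1 → ∫ ξ : Spc D, ‖K1c ν j (toC ξ + Complex.I • toC η)‖ ≤ N
  b1 : ∀ j, ∀ η : Spc D, ‖η‖ ≤ 1 → ∫ ξ : Spc D, ‖K1c μ j (toC ξ + Complex.I • toC η)‖ ≤ N
  u3 : ∀ j l k, ∀ η : Spc D, ‖η‖ ≤ 1 →
    ∫ ξ : Spc D, ‖K3c ν j l k (toC ξ + Complex.I • toC η)‖ ≤ N

lemma exists_kerBound {ν μ : ℝ} (hν : 0 < ν) (hμ : 0 < μ) : ∃ N, KerBound D ν μ N := by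
  obtain ⟨a, ha0, ha⟩ := (goodK0 (D := D) hν).exists_L1
  obtain ⟨b, hb0, hb⟩ := (goodK0 (D := D) hμ).exists_L1
  obtain ⟨c, hc0, hc⟩ := exists_L1_family fun j : Fin D => goodK1 hν j
  obtain ⟨d, hd0, hd⟩ := exists_L1_family fun j : Fin D => goodK1 hμ j
  obtain ⟨e, he0, he⟩ := exists_L1_family fun i : Fin D × Fin D × Fin D =>
    goodK3 hν i.1 i.2.1 i.2.2
  refine ⟨a + b + c + d + e, by positivity, fun η h => (ha η h).trans ?_,
    fun η h => (hb η h).trans ?_, fun j η h => (hc j η h).trans ?_,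
    fun j η h => (hd j η h).trans ?_, fun j l k η h => (he (j, l, k) η h).trans ?_⟩ <;> linarith

/-- All components of both vector fields are holomorphic fields with bound `M`. -/
def PairField (T M : ℝ) (U B : ℝ → Spc D → Spc D) : Prop :=
  ∀ k, HolField T M (fun s w => ((U s w k : ℝ) : ℂ)) ∧ HolField T M (fun s w => ((B s w k : ℝ) : ℂ))

lemma memLinf_coord {f : Spc D → Spc D} (hf : MemLinf f) (k : Fin D) :
    AEStronglyMeasurable (fun w => ((f w k : ℝ) : ℂ)) ∧ ∀ w, ‖((f w k : ℝ) : ℂ)‖ ≤ supN f := by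
  refine ⟨?_, fun w => ?_⟩
  · have hc : Continuous fun v : Spc D => ((v k : ℝ) : ℂ) := by fun_prop
    exact hc.comp_aestronglyMeasurable hf.1
  · rw [Complex.norm_real]
    exact (PiLp.norm_apply_le (f w) k).trans (le_ciSup hf.2 w)

/-- One step of the scheme. -/
lemma scheme_step {ν μ N T M : ℝ} (hν : 0 < ν) (hμ : 0 < μ) (hN : KerBound D ν μ N) (hM : 0 ≤ M)
    {U₀ B₀ : Spc D → Spc D} (hU₀ : MemLinf U₀) (hB₀ : MemLinf B₀)
    {U B : ℕ → ℝ → Spc D → Spc D} {P : ℕ → ℝ → Spc D → ℝ} (h : ApproxMHD D ν μ U₀ B₀ U B P)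
    (n : ℕ) (hn : PairField T M (U n) (B n)) :
    PairField T (N * (supN U₀ + supN B₀) + (4 * D * N + 8 * ν * D ^ 2 * N) * (M ^ 2 * √T))
      (U (n + 1)) (B (n + 1)) := by
  obtain ⟨hU0, hB0, hP0, -, hstep, Cd, -, hP⟩ := h
  have hN0 := hN.nonneg
  have hUs : 0 ≤ supN U₀ := Real.iSup_nonneg fun _ => norm_nonneg _
  have hBs : 0 ≤ supN B₀ := Real.iSup_nonneg fun _ => norm_nonneg _
  have hM2 : 0 ≤ M * M + M * M := by positivity
  have hg : ∀ j l, HolField T (M * M + M * M) (fun s w =>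
      ((U n s w j * U n s w l - B n s w j * B n s w l : ℝ) : ℂ)) := fun j l => by
    have := ((hn j).1.mul (hn l).1 hM).sub ((hn j).2.mul (hn l).2 hM)
    push_cast; exact this
  have hg' : ∀ j l, HolField T (M * M + M * M) (fun s w =>
      ((U n s w j * B n s w l - B n s w j * U n s w l : ℝ) : ℂ)) := fun j l => by
    have := ((hn j).1.mul (hn l).2 hM).sub ((hn j).2.mul (hn l).1 hM)
    push_cast; exact this
  have hPn : ∀ s ∈ Ioo 0 T, IsBMO (P n s) ∧ SolvesPoisson D (P n s)
      (fun j l w => U n s w j * U n s w l - B n s w j * B n s w l) := by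
    intro s hs
    cases n with
    | zero =>
      have e : P 0 s = fun _ => 0 := funext (hP0 s)
      simp only [e, hU0, hB0]
      simpa using And.intro isBMO_zero solvesPoisson_zero
    | succ m => exact ⟨(hP m s hs.1).1, (hP m s hs.1).2.1⟩
  intro k
  constructor
  · have h0 := heat_field (T := T) (goodK0 hν) hN.u0 (memLinf_coord hU₀ k).1 (memLinf_coord hU₀ k).2
    have h1 := HolField.sum Finset.univ fun j =>
      (duhamel_one (hg j k) hM2 (goodK1 hν j) hN0 (hN.u1 j)).1
    have h3 := (HolField.sum Finset.univ fun j => HolField.sum Finset.univ fun l =>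
      (duhamel_three (hg j l) hM2 (goodK3 hν j l k) hN0 (hN.u3 j l k)).1).const_mul (ν : ℂ)
    refine (((h0.sub h1).sub h3).congr fun t ht x => ?_).mono ?_
    · rw [(hstep n t ht.1 x k).1, SS_K0 hν ht.1, ← duhamel_one_eq hν hM2 (fun j => hg j k) ht x,
        ← duhamel_three_eq hν hM2 hg hPn k ht x]
      push_cast; rfl
    · rw [Finset.card_univ, Fintype.card_fin, Complex.norm_real, Real.norm_eq_abs, abs_of_pos hν]
      have : N * supN U₀ ≤ N * (supN U₀ + supN B₀) :=
        mul_le_mul_of_nonneg_left (by linarith) hN0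
      refine le_of_sub_nonneg ?_
      have e : N * (supN U₀ + supN B₀) + (4 * D * N + 8 * ν * D ^ 2 * N) * (M ^ 2 * √T)
          - (N * supN U₀ + D * (N * (M * M + M * M) * (2 * √T))
            + ν * (D * (D * (N * (M * M + M * M) * 2 * (2 * √T)))))
          = N * (supN U₀ + supN B₀) - N * supN U₀ := by ring
      rw [e]; linarith
  · have h0 := heat_field (T := T) (goodK0 hμ) hN.b0 (memLinf_coord hB₀ k).1 (memLinf_coord hB₀ k).2
    have h1 := HolField.sum Finset.univ fun j =>
      (duhamel_one (hg' j k) hM2 (goodK1 hμ j) hN0 (hN.b1 j)).1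
    refine ((h0.sub h1).congr fun t ht x => ?_).mono ?_
    · rw [(hstep n t ht.1 x k).2, SS_K0 hμ ht.1, ← duhamel_one_eq hμ hM2 (fun j => hg' j k) ht x]
      push_cast; rfl
    · rw [Finset.card_univ, Fintype.card_fin]
      have h4 : N * supN B₀ ≤ N * (supN U₀ + supN B₀) :=
        mul_le_mul_of_nonneg_left (by linarith) hN0
      have h5 : 0 ≤ 8 * ν * D ^ 2 * N * (M ^ 2 * √T) := by positivity
      have e : D * (N * (M * M + M * M) * (2 * √T)) = 4 * D * N * (M ^ 2 * √T) := by ring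
      rw [e, add_mul]; linarith

/-- The smallness condition on the time interval closes the induction. -/
lemma time_small {C A β T : ℝ} (hC : 1 ≤ C) (hA : 0 ≤ A) (hβ : β ∈ Ioc (1 / 2 : ℝ) 1) (hT : 0 < T)
    (h : T ≤ (2 * β - 1) ^ 2 / β ^ 4 * (1 / (16 * C ^ 4 * A ^ 2))) :
    C * (A + (2 * β * C * A) ^ 2 * √T) ≤ 2 * β * C * A := by
  have hβ0 : 0 < β := by linarith [hβ.1]
  have hA0 : 0 < A := by
    rcases hA.eq_or_lt with h0 | h0
    · rw [← h0] at h; simp at h; linarith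
    · exact h0
  have hC0 : 0 < C := by linarith
  have h1 : √T ≤ (2 * β - 1) / (4 * β ^ 2 * C ^ 2 * A) := by
    refine Real.sqrt_le_iff.2 ⟨div_nonneg (by linarith [hβ.1]) (by positivity), h.trans_eq ?_⟩
    field_simp
    norm_num
  have h2 : (2 * β * C * A) ^ 2 * √T ≤ (2 * β - 1) * A := by
    calc _ ≤ (2 * β * C * A) ^ 2 * ((2 * β - 1) / (4 * β ^ 2 * C ^ 2 * A)) := by gcongr
      _ = _ := by field_simp; ring
  calc _ ≤ C * (A + (2 * β - 1) * A) := by gcongr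
    _ = _ := by ring

/-- The extensions of the components combine to an extension of the vector field. -/
lemma HolField.assemble {T M t : ℝ} {V : ℝ → Spc D → Spc D}
    (h : ∀ k, HolField T M (fun s w => ((V s w k : ℝ) : ℂ))) (ht : t ∈ Ioo 0 T) :
    ∃ F : CSpc D → CSpc D, AnalyticOnNhd ℂ F (ostrip D √t) ∧ (∀ x, F (toC x) = toC (V t x)) ∧
      ∀ z ∈ ostrip D √t, ‖F z‖ ≤ D * M := by
  choose G h1 h2 h3 using fun k => (h k).hol t ht
  refine ⟨fun z => ∑ k, G k z • EuclideanSpace.single k (1 : ℂ), fun z hz => ?_, fun x => ?_,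
    fun z hz => ?_⟩
  · exact Finset.analyticAt_fun_sum _ fun k _ => (h1 k z hz).fun_smul analyticAt_const
  · ext i
    simp [h2, toC_apply, Finset.sum_apply, Pi.single_apply]
  · refine (norm_sum_le _ _).trans ?_
    calc _ ≤ ∑ k : Fin D, M := Finset.sum_le_sum fun k _ => by
          rw [norm_smul, PiLp.norm_single, norm_one, mul_one]; exact h3 k z hz
      _ = _ := by simp

end Aux

/-- uniform holomorphic extension of the approximants of the MHD scheme to
the strip `{x+iy : |y| ≤ √t/(2C₄)}` with the bound `2βC₄(‖U₀‖_∞+‖B₀‖_∞)`, where `C₄ ≥ 1`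
depends only on `μ, ν, D`, `β ∈ (1/2,1]`, and `0 < T ≤ T_β = ((2β-1)²/β⁴) T₄`. -/
theorem stmt7 (D : ℕ) (ν μ : ℝ) (hν : 0 < ν) (hμ : 0 < μ) :
    ∃ C₄ : ℝ, 1 ≤ C₄ ∧
      ∀ U₀ B₀ : Spc D → Spc D, MemLinf U₀ → MemLinf B₀ → DivFree U₀ → DivFree B₀ →
      ∀ (U B : ℕ → ℝ → Spc D → Spc D) (P : ℕ → ℝ → Spc D → ℝ),
        ApproxMHD D ν μ U₀ B₀ U B P →
      ∀ β ∈ Set.Ioc (1 / 2 : ℝ) 1,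
      ∀ T : ℝ, 0 < T →
        T ≤ (2 * β - 1) ^ 2 / β ^ 4
            * (1 / (16 * C₄ ^ 4 * (supN U₀ + supN B₀) ^ 2)) →
      ∀ n : ℕ, ∀ t ∈ Set.Ioo (0 : ℝ) T,
        ∃ F H : CSpc D → CSpc D,
          AnalyticOnNhd ℂ F (strip D (Real.sqrt t / (2 * C₄))) ∧
          AnalyticOnNhd ℂ H (strip D (Real.sqrt t / (2 * C₄))) ∧
          (∀ x : Spc D, F (toC x) = toC (U n t x)) ∧
          (∀ x : Spc D, H (toC x) = toC (B n t x)) ∧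
          ∀ z ∈ strip D (Real.sqrt t / (2 * C₄)),
            ‖F z‖ + ‖H z‖ ≤ 2 * β * C₄ * (supN U₀ + supN B₀) := by
  obtain ⟨N, hN⟩ := exists_kerBound (D := D) hν hμ
  have hN0 := hN.nonneg
  set c : ℝ := N + (4 * D * N + 8 * ν * D ^ 2 * N) with hc
  have hc0 : 0 ≤ c := by positivity
  -- one step of the scheme bounds every component by `c (A + M² √T)`; the factor `2 D + 1` pays
  -- for adding up the `2 D` components
  refine ⟨1 + (2 * D + 1) * c, le_add_of_nonneg_right (by positivity), ?_⟩
  set C : ℝ := 1 + (2 * D + 1) * c with hC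
  have hC1 : 1 ≤ C := le_add_of_nonneg_right (by positivity)
  intro U₀ B₀ hU₀ hB₀ _ _ U B P h β hβ T hT hTβ n t ht
  set A : ℝ := supN U₀ + supN B₀ with hA
  have hA0 : 0 ≤ A := add_nonneg (Real.iSup_nonneg fun _ => norm_nonneg _)
    (Real.iSup_nonneg fun _ => norm_nonneg _)
  have hβ0 : 0 < β := by linarith [hβ.1]
  set M : ℝ := 2 * β * C * A with hM
  have hM0 : 0 ≤ M := by positivity
  have hD : (0 : ℝ) < 2 * D + 1 := by positivity
  have hsmall := time_small hC1 hA0 hβ hT hTβ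
  rw [← hM] at hsmall
  have hinv : ∀ n, PairField T (M / (2 * D + 1)) (U n) (B n) := by
    intro n
    induction n with
    | zero =>
      intro k
      have hz := HolField.zero (D := D) (T := T) (M := M / (2 * D + 1)) (by positivity)
      exact ⟨hz.congr fun s _ w => by simp [h.1], hz.congr fun s _ w => by simp [h.2.1]⟩
    | succ n ih =>
      have hs := scheme_step hν hμ hN (by positivity) hU₀ hB₀ h n ih
      have hle : N * A + (4 * D * N + 8 * ν * D ^ 2 * N) * ((M / (2 * D + 1)) ^ 2 * √T)
          ≤ M / (2 * D + 1) := by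
        have h1 : M / (2 * D + 1) ≤ M := div_le_self hM0 (by linarith [Nat.cast_nonneg (α := ℝ) D])
        have h2 : (M / (2 * D + 1)) ^ 2 * √T ≤ M ^ 2 * √T := by gcongr
        have h3 : 0 ≤ M ^ 2 * √T := by positivity
        have h4 : 0 ≤ 4 * D * N + 8 * ν * D ^ 2 * N := by positivity
        rw [le_div_iff₀ hD]
        calc _ ≤ c * (A + M ^ 2 * √T) * (2 * D + 1) := by
              refine mul_le_mul_of_nonneg_right ?_ hD.le
              have h5 := mul_le_mul_of_nonneg_left h2 h4
              have h6 := mul_nonneg h4 hA0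
              have h7 := mul_nonneg hN0 h3
              rw [hc]
              linarith [add_mul N (4 * D * N + 8 * ν * D ^ 2 * N) (A + M ^ 2 * √T),
                mul_add N A (M ^ 2 * √T),
                mul_add (4 * D * N + 8 * ν * D ^ 2 * N) A (M ^ 2 * √T)]
          _ = (C - 1) * (A + M ^ 2 * √T) := by rw [hC]; ring
          _ ≤ C * (A + M ^ 2 * √T) :=
              mul_le_mul_of_nonneg_right (by linarith) (by positivity)
          _ ≤ M := hsmall
      exact fun k => ⟨(hs k).1.mono hle, (hs k).2.mono hle⟩
  obtain ⟨F, hF1, hF2, hF3⟩ := HolField.assemble (fun k => (hinv n k).1) ht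
  obtain ⟨H, hH1, hH2, hH3⟩ := HolField.assemble (fun k => (hinv n k).2) ht
  have hsub : strip D (√t / (2 * C)) ⊆ ostrip D √t := by
    intro z hz
    have hz' : ‖imPart z‖ ≤ √t / (2 * C) := hz
    exact hz'.trans_lt (div_lt_self (Real.sqrt_pos.2 ht.1) (by linarith))
  refine ⟨F, H, hF1.mono hsub, hH1.mono hsub, hF2, hH2, fun z hz => ?_⟩
  calc ‖F z‖ + ‖H z‖ ≤ D * (M / (2 * D + 1)) + D * (M / (2 * D + 1)) :=
        add_le_add (hF3 z (hsub hz)) (hH3 z (hsub hz))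
    _ = 2 * D / (2 * D + 1) * M := by ring
    _ ≤ 1 * M := mul_le_mul_of_nonneg_right ((div_le_one hD).2 (by linarith)) hM0
    _ = M := one_mul M

end
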